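/- arXiv:0907.3306 — 4 statements merged into one kernel-verified Lean document; each statement's English description precedes it below -/
import Mathlib

section
/- Let F be a field complete with respect to a nonarchimedean absolute value |·|, let q ∈ F with 0 < |q| < 1, let N ≥ 2 be an integer, and let a₁ ∈ ℚ with 0 ≤ a₁ < 1 and N·a₁ ∈ ℤ. Let ρ ∈ F with ρ^N = q^{N·a₁} (so |ρ| = |q|^{a₁}), with ρ = 1 in case a₁ = 0, and let ζ ∈ F be a root of unity of order dividing N, with ζ ≠ 1 in case a₁ = 0. Then the infinite product G = ∏_{n=0}^∞ (1 − qⁿρζ)(1 − q^{n+1}ρ^{−1}ζ^{−1}) converges in F, and: (i) if a₁ ≠ 0, then |G| = 1; (ii) if a₁ = 0 and there is no prime number p with |p| < 1 dividing the multiplicative order of ζ, then |G| = 1; (iii) if a₁ = 0 and p is a prime number with |p| < 1 dividing the multiplicative order of ζ, then |p|^{1/(p−1)} ≤ |G| ≤ 1. -/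
theorem aux_one_sub {F : Type*} [NormedField F] (hna : IsNonarchimedean (fun x : F => ‖x‖))
    (y : F) (hy : ‖y‖ < 1) : ‖1 - y‖ = 1 := by
  apply le_antisymm
  · have h := hna 1 (-y)
    simp only [norm_neg, norm_one, ← sub_eq_add_neg] at h
    exact h.trans (max_le le_rfl hy.le)
  · have h := hna (1 - y) y
    simp only [sub_add_cancel, norm_one] at h
    rcases le_max_iff.1 h with h | h
    · exact h
    · linarith

theorem aux_one_sub_le {F : Type*} [NormedField F] (hna : IsNonarchimedean (fun x : F => ‖x‖))
    (y : F) (hy : ‖y‖ ≤ 1) : ‖1 - y‖ ≤ 1 := by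
  have h := hna 1 (-y)
  simp only [norm_neg, norm_one, ← sub_eq_add_neg] at h
  exact h.trans (max_le le_rfl hy)

theorem aux_pow {F : Type*} [NormedField F] (hna : IsNonarchimedean (fun x : F => ‖x‖))
    (y : F) (hy : ‖y‖ ≤ 1) (i : ℕ) : ‖1 - y ^ i‖ ≤ ‖1 - y‖ := by
  induction i with
  | zero => simp
  | succ i ih =>
    have h := hna (1 - y ^ i) (y ^ i * (1 - y))
    have e : (1 - y ^ i) + (y ^ i * (1 - y)) = 1 - y ^ (i + 1) := by ring
    simp only [e, norm_mul, norm_pow] at h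
    refine h.trans (max_le ih ?_)
    exact mul_le_of_le_one_left (norm_nonneg _) (pow_le_one₀ (norm_nonneg _) hy)

theorem aux_prime {F : Type*} [NormedField F] (hna : IsNonarchimedean (fun x : F => ‖x‖))
    (z : F) (hz : ‖z‖ ≤ 1) (hfin : orderOf z ≠ 0) (p : ℕ) (hp : p.Prime) (hd : p ∣ orderOf z) :
    ‖(p : F)‖ ≤ ‖1 - z‖ ^ (p - 1) := by
  have hη : IsPrimitiveRoot (z ^ (orderOf z / p)) p := by
    have := IsPrimitiveRoot.orderOf (z ^ (orderOf z / p))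
    rwa [orderOf_pow_orderOf_div hfin hd] at this
  have : NeZero p := ⟨hp.ne_zero⟩
  have : Fact p.Prime := ⟨hp⟩
  have h := congrArg (Polynomial.eval (1 : F)) (Polynomial.cyclotomic_eq_prod_X_sub_primitiveRoots hη)
  rw [Polynomial.eval_one_cyclotomic_prime, Polynomial.eval_prod] at h
  rw [h, norm_prod, ← Nat.totient_prime hp, ← hη.card_primitiveRoots, ← Finset.prod_const]
  refine Finset.prod_le_prod (fun _ _ => norm_nonneg _) fun μ hμ => ?_
  have hμ' := (mem_primitiveRoots hp.pos).1 hμ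
  obtain ⟨i, -, rfl⟩ := hη.eq_pow_of_pow_eq_one hμ'.pow_eq_one
  simp only [Polynomial.eval_sub, Polynomial.eval_X, Polynomial.eval_C]
  rw [← pow_mul]
  exact aux_pow hna z hz _

theorem aux_prod {F : Type*} [NormedField F] [CompleteSpace F]
    (hna : IsNonarchimedean (fun x : F => ‖x‖))
    (q : F) (hq1 : ‖q‖ < 1) (x y : F) (hx : ‖x‖ ≤ 1) (hy : ‖q * y‖ < 1) :
    Multipliable (fun n : ℕ => (1 - q ^ n * x) * (1 - q ^ (n + 1) * y)) ∧
    ‖∏' n : ℕ, (1 - q ^ n * x) * (1 - q ^ (n + 1) * y)‖ = ‖1 - x‖ := by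
  have hM : Multipliable (fun n : ℕ => (1 - q ^ n * x) * (1 - q ^ (n + 1) * y)) := by
    have hs : Summable (fun n : ℕ => ‖-(q ^ n * x) - q ^ (n + 1) * y + q ^ n * x * (q ^ (n + 1) * y)‖) := by
      refine Summable.of_nonneg_of_le (fun _ => norm_nonneg _) (fun n => ?_)
        ((summable_geometric_of_lt_one (norm_nonneg q) hq1).mul_left 3)
      have hqn : ‖q‖ ^ n ≤ 1 := pow_le_one₀ (norm_nonneg _) hq1.le
      have hqn0 : 0 ≤ ‖q‖ ^ n := by positivity
      have A : ‖q ^ n * x‖ ≤ ‖q‖ ^ n := by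
        rw [norm_mul, norm_pow]; exact mul_le_of_le_one_right hqn0 hx
      have B : ‖q ^ (n + 1) * y‖ ≤ ‖q‖ ^ n := by
        rw [pow_succ, mul_assoc, norm_mul, norm_pow]; exact mul_le_of_le_one_right hqn0 hy.le
      have C : ‖q ^ n * x * (q ^ (n + 1) * y)‖ ≤ ‖q‖ ^ n := by
        rw [norm_mul]
        exact (mul_le_of_le_one_right (norm_nonneg _) (B.trans hqn)).trans A
      calc _ ≤ ‖q ^ n * x‖ + ‖q ^ (n + 1) * y‖ + ‖q ^ n * x * (q ^ (n + 1) * y)‖ := by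
            refine (norm_add_le _ _).trans (add_le_add_left ((norm_sub_le _ _).trans ?_) _)
            rw [norm_neg]
        _ ≤ 3 * ‖q‖ ^ n := by linarith
    refine (multipliable_one_add_of_summable hs).congr fun n => ?_
    ring
  refine ⟨hM, ?_⟩
  have ht := (hM.hasProd.tendsto_prod_nat.norm)
  refine tendsto_nhds_unique ht ?_
  refine tendsto_const_nhds.congr' ?_
  filter_upwards [Filter.eventually_ge_atTop 1] with n hn
  have B : ∀ n, ‖q ^ (n + 1) * y‖ < 1 := fun n => by
    rw [pow_succ, mul_assoc, norm_mul, norm_pow]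
    exact (mul_le_of_le_one_left (norm_nonneg _) (pow_le_one₀ (norm_nonneg _) hq1.le)).trans_lt hy
  have A : ∀ n, ‖q ^ (n + 1) * x‖ < 1 := fun n => by
    rw [norm_mul, norm_pow]
    exact (mul_le_of_le_one_right (by positivity) hx).trans_lt
      (pow_lt_one₀ (norm_nonneg _) hq1 (Nat.succ_ne_zero n))
  obtain ⟨m, rfl⟩ : ∃ m, n = m + 1 := ⟨n - 1, by omega⟩
  rw [Finset.prod_range_succ', norm_mul, norm_prod, Finset.prod_eq_one, one_mul, norm_mul,
    aux_one_sub hna _ (B 0), mul_one, pow_zero, one_mul]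
  intro i _
  rw [norm_mul, aux_one_sub hna _ (A i), aux_one_sub hna _ (B _), mul_one]

/-- Nonarchimedean estimate for the infinite-product part of the Siegel function over a
complete nonarchimedean field `F`: with `q ∈ F`, `0 < |q| < 1`, `N ≥ 2`, `0 ≤ a₁ < 1`,
`N·a₁ = k ∈ ℤ≥0`, `ρ^N = q^k` (`ρ = 1` if `a₁ = 0`), and `ζ` a root of unity of order
dividing `N` (`ζ ≠ 1` if `a₁ = 0`), the product
`G = ∏_{n≥0} (1 − qⁿρζ)(1 − q^{n+1}ρ⁻¹ζ⁻¹)` converges, and `|G| = 1` unless `a₁ = 0`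
and some prime `p` with `|p| < 1` divides the order of `ζ`, in which case
`|p|^{1/(p−1)} ≤ |G| ≤ 1`. -/
theorem stmt_15 {F : Type*} [NormedField F] [CompleteSpace F]
    (hna : IsNonarchimedean (fun x : F => ‖x‖))
    (q : F) (hq0 : 0 < ‖q‖) (hq1 : ‖q‖ < 1)
    (N : ℕ) (hN : 2 ≤ N)
    (a₁ : ℚ) (h0 : 0 ≤ a₁) (h1 : a₁ < 1)
    (k : ℕ) (hk : (N : ℚ) * a₁ = (k : ℚ))
    (ρ : F) (hρ : ρ ^ N = q ^ k) (hρ1 : a₁ = 0 → ρ = 1)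
    (ζ : F) (hζ : ζ ^ N = 1) (hζ1 : a₁ = 0 → ζ ≠ 1) :
    Multipliable (fun n : ℕ => (1 - q ^ n * ρ * ζ) * (1 - q ^ (n + 1) * ρ⁻¹ * ζ⁻¹)) ∧
    (a₁ ≠ 0 → ‖∏' n : ℕ, (1 - q ^ n * ρ * ζ) * (1 - q ^ (n + 1) * ρ⁻¹ * ζ⁻¹)‖ = 1) ∧
    (a₁ = 0 → (∀ p : ℕ, p.Prime → ‖(p : F)‖ < 1 → ¬p ∣ orderOf ζ) →
      ‖∏' n : ℕ, (1 - q ^ n * ρ * ζ) * (1 - q ^ (n + 1) * ρ⁻¹ * ζ⁻¹)‖ = 1) ∧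
    (a₁ = 0 → ∀ p : ℕ, p.Prime → ‖(p : F)‖ < 1 → p ∣ orderOf ζ →
      ‖(p : F)‖ ^ ((1 : ℝ) / ((p : ℝ) - 1)) ≤
          ‖∏' n : ℕ, (1 - q ^ n * ρ * ζ) * (1 - q ^ (n + 1) * ρ⁻¹ * ζ⁻¹)‖ ∧
        ‖∏' n : ℕ, (1 - q ^ n * ρ * ζ) * (1 - q ^ (n + 1) * ρ⁻¹ * ζ⁻¹)‖ ≤ 1) := by
  have hN0 : N ≠ 0 := by omega
  have hz : ‖ζ‖ = 1 := by
    have h := congrArg norm hζ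
    rw [norm_pow, norm_one] at h
    exact (pow_eq_one_iff_of_nonneg (norm_nonneg _) hN0).1 h
  have hkey : ‖ρ‖ ≤ 1 ∧ ‖q‖ * ‖ρ‖⁻¹ < 1 ∧ (a₁ ≠ 0 → ‖ρ‖ < 1) := by
    by_cases ha : a₁ = 0
    · rw [hρ1 ha]; simp [ha, hq1]
    · have hapos : 0 < a₁ := lt_of_le_of_ne h0 (Ne.symm ha)
      have hNq : (0 : ℚ) < N := by exact_mod_cast Nat.pos_of_ne_zero hN0
      have hk0 : k ≠ 0 := by
        rintro rfl
        have := mul_pos hNq hapos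
        rw [hk] at this
        simp at this
      have hkN : k < N := by
        have : (k : ℚ) < N := by rw [← hk]; nlinarith
        exact_mod_cast this
      have hn : ‖ρ‖ ^ N = ‖q‖ ^ k := by rw [← norm_pow, hρ, norm_pow]
      have h1' : ‖ρ‖ < 1 := by
        by_contra hc
        have := one_le_pow₀ (n := N) (not_lt.1 hc)
        rw [hn] at this
        exact absurd this (not_le.2 (pow_lt_one₀ hq0.le hq1 hk0))
      have h2 : ‖q‖ < ‖ρ‖ := by
        refine lt_of_pow_lt_pow_left₀ N (norm_nonneg _) ?_
        rw [hn]
        exact pow_lt_pow_right_of_lt_one₀ hq0 hq1 hkN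
      refine ⟨h1'.le, ?_, fun _ => h1'⟩
      rw [← div_eq_mul_inv, div_lt_one (hq0.trans h2)]
      exact h2
  obtain ⟨hr1, hr2, hr3⟩ := hkey
  obtain ⟨hM, hG⟩ := aux_prod hna q hq1 (ρ * ζ) (ρ⁻¹ * ζ⁻¹)
    (by rw [norm_mul, hz, mul_one]; exact hr1)
    (by rw [norm_mul, norm_mul, norm_inv, norm_inv, hz, inv_one, mul_one]; exact hr2)
  simp only [← mul_assoc] at hM hG
  have hfin : orderOf ζ ≠ 0 := by
    rw [orderOf_ne_zero_iff]
    exact isOfFinOrder_iff_pow_eq_one.2 ⟨N, by omega, hζ⟩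
  rw [hG]
  refine ⟨hM, fun ha => ?_, fun ha hp => ?_, fun ha p hp hp1 hd => ⟨?_, ?_⟩⟩
  · refine aux_one_sub hna _ ?_
    rw [norm_mul, hz, mul_one]
    exact hr3 ha
  · rw [hρ1 ha, one_mul]
    obtain ⟨p, hpp, hpd⟩ := Nat.exists_prime_and_dvd (n := orderOf ζ)
      (fun h => hζ1 ha (orderOf_eq_one_iff.1 h))
    have h2 := aux_prime hna ζ hz.le hfin p hpp hpd
    have h3 : 1 ≤ ‖(p : F)‖ := not_lt.1 fun h => hp p hpp h hpd
    refine le_antisymm (aux_one_sub_le hna _ hz.le) (not_lt.1 fun h => ?_)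
    have := pow_lt_one₀ (norm_nonneg _) h (n := p - 1) (by have := hpp.two_le; omega)
    linarith
  · rw [hρ1 ha, one_mul]
    have h2 := aux_prime hna ζ hz.le hfin p hp hd
    have hp2 := hp.two_le
    have hpos : (0 : ℝ) < (p : ℝ) - 1 := by
      have : (2 : ℝ) ≤ p := by exact_mod_cast hp2
      linarith
    have hc : ((p - 1 : ℕ) : ℝ) = (p : ℝ) - 1 := by
      rw [Nat.cast_sub (by omega), Nat.cast_one]
    calc _ ≤ (‖1 - ζ‖ ^ (p - 1)) ^ ((1 : ℝ) / ((p : ℝ) - 1)) :=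
          Real.rpow_le_rpow (norm_nonneg _) h2 (by positivity)
      _ = ‖1 - ζ‖ := by
          rw [← Real.rpow_natCast, ← Real.rpow_mul (norm_nonneg _), hc, mul_one_div_cancel hpos.ne',
            Real.rpow_one]
  · refine aux_one_sub_le hna _ ?_
    rw [norm_mul, hz, mul_one]
    exact hr1
end

section
/- Let a = (a₁, a₂) ∈ ℚ² with 0 ≤ a₁ < 1 and a ∉ ℤ². Then the Siegel function g_a is integral over ℤ[j]: there exist an integer n ≥ 1 and polynomials P₀, …, P_{n−1} ∈ ℤ[X] such that for every τ ∈ ℍ one has g_a(τ)ⁿ + ∑_{i=0}^{n−1} P_i(j(τ))·g_a(τ)^i = 0. -/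
open Complex

/-- The second Bernoulli polynomial `B₂(T) = T² − T + 1/6`. -/
noncomputable def B2 (t : ℝ) : ℝ := t ^ 2 - t + 1 / 6

/-- `q^s := e^{2πisτ}` for real `s`. -/
noncomputable def qpow (τ : ℂ) (s : ℝ) : ℂ := Complex.exp (2 * Real.pi * I * (s : ℂ) * τ)

/-- The Siegel function
`g_a(τ) = −q^{B₂(a₁)/2}·e^{πi a₂(a₁−1)}·∏_{n=0}^∞ (1 − q^{n+a₁}e^{2πi a₂})(1 − q^{n+1−a₁}e^{−2πi a₂})`. -/
noncomputable def siegel (a₁ a₂ : ℝ) (τ : ℂ) : ℂ :=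
  -qpow τ (B2 a₁ / 2) * Complex.exp (Real.pi * I * (a₂ : ℂ) * ((a₁ : ℂ) - 1)) *
    ∏' n : ℕ,
      (1 - qpow τ ((n : ℝ) + a₁) * Complex.exp (2 * Real.pi * I * (a₂ : ℂ))) *
        (1 - qpow τ ((n : ℝ) + 1 - a₁) * Complex.exp (-(2 * Real.pi * I * (a₂ : ℂ))))

/-- `c₂(τ) = ((2π)⁴/12)·(1 + 240·∑_{n=1}^∞ n³qⁿ/(1−qⁿ))` where `q = e^{2πiτ}`. -/
noncomputable def c2 (τ : ℂ) : ℂ :=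
  ((2 * (Real.pi : ℂ)) ^ 4 / 12) *
    (1 + 240 * ∑' n : ℕ, ((n : ℂ) + 1) ^ 3 * Complex.exp (2 * Real.pi * I * τ) ^ (n + 1) /
      (1 - Complex.exp (2 * Real.pi * I * τ) ^ (n + 1)))

/-- The modular discriminant `Δ(τ) = (2π)¹²·q·∏_{n=1}^∞ (1−qⁿ)²⁴`, `q = e^{2πiτ}`. -/
noncomputable def Delta (τ : ℂ) : ℂ :=
  (2 * (Real.pi : ℂ)) ^ 12 * Complex.exp (2 * Real.pi * I * τ) *
    ∏' n : ℕ, (1 - Complex.exp (2 * Real.pi * I * τ) ^ (n + 1)) ^ 24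

/-- The modular invariant `j(τ) = (12·c₂(τ))³/Δ(τ)`. -/
noncomputable def jfun (τ : ℂ) : ℂ := (12 * c2 τ) ^ 3 / Delta τ

namespace SG

open UpperHalfPlane hiding I
open ModularForm ModularFormClass MatrixGroups EisensteinSeries

/-- Power series with algebraic integer coefficients. -/
def IntPS (p : PowerSeries ℂ) : Prop := ∀ n, IsIntegral ℤ (p.coeff n)

lemma IntPS.mul {p q : PowerSeries ℂ} (hp : IntPS p) (hq : IntPS q) : IntPS (p * q) := by
  intro n
  rw [PowerSeries.coeff_mul]
  exact IsIntegral.sum _ fun i _ => (hp _).mul (hq _)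

lemma IntPS.sub {p q : PowerSeries ℂ} (hp : IntPS p) (hq : IntPS q) : IntPS (p - q) := by
  intro n
  rw [map_sub]
  exact (hp n).sub (hq n)

lemma IntPS.one : IntPS 1 := by
  intro n
  rw [PowerSeries.coeff_one]
  split_ifs
  · exact isIntegral_one
  · exact isIntegral_zero

lemma IntPS.pow {p : PowerSeries ℂ} (hp : IntPS p) (n : ℕ) : IntPS (p ^ n) := by
  induction n with
  | zero => simpa using IntPS.one
  | succ n ih => rw [pow_succ]; exact ih.mul hp

lemma IntPS.smul {p : PowerSeries ℂ} (hp : IntPS p) {c : ℂ} (hc : IsIntegral ℤ c) :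
    IntPS (c • p) := by
  intro n
  rw [PowerSeries.coeff_smul]
  exact hc.mul (hp n)

lemma IntPS.of_map {p : PowerSeries ℤ} : IntPS (p.map (Int.castRingHom ℂ)) := by
  intro n
  rw [PowerSeries.coeff_map]
  exact isIntegral_algebraMap (R := ℤ) (A := ℂ)

lemma IntPS.div {d g : PowerSeries ℂ} (hd : IntPS d) (h0 : d.coeff 0 = 0) (h1 : d.coeff 1 = 1)
    (h : IntPS (d * g)) : IntPS g := by
  intro n
  induction n using Nat.strong_induction_on with
  | _ n ih =>
    have := h (n + 1)
    rw [PowerSeries.coeff_mul, Finset.Nat.sum_antidiagonal_succ, h0, zero_mul, zero_add] at this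
    cases n with
    | zero => simpa [h1] using this
    | succ n =>
      rw [Finset.Nat.sum_antidiagonal_succ, zero_add, h1, one_mul] at this
      have h2 : IsIntegral ℤ (∑ p ∈ Finset.HasAntidiagonal.antidiagonal n, d.coeff (p.1 + 1 + 1) * g.coeff p.2) := by
        refine IsIntegral.sum _ fun i hi => (hd _).mul (ih _ ?_)
        have := Finset.HasAntidiagonal.mem_antidiagonal.1 hi
        omega
      simpa using this.sub h2

/-- `5 σ₃(n) + 7 σ₅(n)` is divisible by 12. -/
lemma twelve_dvd (n : ℕ) :
    12 ∣ 5 * ArithmeticFunction.sigma 3 n + 7 * ArithmeticFunction.sigma 5 n := by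
  rw [ArithmeticFunction.sigma_apply, ArithmeticFunction.sigma_apply, Finset.mul_sum,
    Finset.mul_sum, ← Finset.sum_add_distrib]
  refine Finset.dvd_sum fun d _ => ?_
  have : ∀ x : ZMod 12, 5 * x ^ 3 + 7 * x ^ 5 = 0 := by decide
  have h := this d
  exact (ZMod.natCast_eq_zero_iff _ 12).1 (by push_cast; exact h)

lemma bern4 : bernoulli 4 = -1/30 := by
  norm_num [bernoulli, bernoulli'_four]

lemma bern6 : bernoulli 6 = 1/42 := by
  have : bernoulli' 6 = 1/42 := by
    have h5 : bernoulli' 5 = 0 := by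
      rw [bernoulli'_def]; norm_num [Finset.sum_range_succ, Nat.choose]
    rw [bernoulli'_def]; norm_num [Finset.sum_range_succ, Nat.choose, h5]
  norm_num [bernoulli, this]

/-- `σ_k` generating series. -/
noncomputable def sigS (k : ℕ) : PowerSeries ℤ :=
  PowerSeries.mk fun n => (ArithmeticFunction.sigma k n : ℤ)

lemma E4_exp : qExpansion 1 E₄ = (1 + 240 * sigS 3 : PowerSeries ℤ).map (Int.castRingHom ℂ) := by
  ext n
  rw [E_qExpansion_coeff _ ⟨2, rfl⟩, PowerSeries.coeff_map, map_add,
    show (240 : PowerSeries ℤ) = PowerSeries.C 240 from rfl, PowerSeries.coeff_C_mul,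
    PowerSeries.coeff_one, sigS, PowerSeries.coeff_mk]
  rcases eq_or_ne n 0 with rfl | h
  · simp
  · simp [h]
    rw [bern4]; norm_num

lemma E6_exp : qExpansion 1 E₆ = (1 - 504 * sigS 5 : PowerSeries ℤ).map (Int.castRingHom ℂ) := by
  ext n
  rw [E_qExpansion_coeff _ ⟨3, rfl⟩, PowerSeries.coeff_map, map_sub,
    show (504 : PowerSeries ℤ) = PowerSeries.C 504 from rfl, PowerSeries.coeff_C_mul,
    PowerSeries.coeff_one, sigS, PowerSeries.coeff_mk]
  rcases eq_or_ne n 0 with rfl | h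
  · simp
  · simp [h]
    rw [bern6]; norm_num

lemma int_E4 : IntPS (qExpansion 1 E₄) := by
  rw [E4_exp]; exact IntPS.of_map

lemma int_Delta : IntPS (qExpansion 1 discriminant) := by
  have h1 : ((1728 : ℂ) • (CuspForm.discriminant : ℍ → ℂ)) =
      ⇑(E₄.pow 3) - ⇑(E₆.pow 2) := by
    ext z
    have := discriminant_eq_E₄_cube_sub_E₆_sq z
    simp only [Pi.smul_apply, CuspForm.coe_discriminant, smul_eq_mul, this, coe_pow,
      Pi.sub_apply, Pi.pow_apply]
    ring
  have h2 := congrArg (qExpansion 1) h1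
  rw [ModularForm.qExpansion_smul one_pos one_mem_strictPeriods_SL,
    UpperHalfPlane.qExpansion_sub
      (ModularFormClass.analyticAt_cuspFunction_zero _ one_pos one_mem_strictPeriods_SL)
      (ModularFormClass.analyticAt_cuspFunction_zero _ one_pos one_mem_strictPeriods_SL),
    ModularForm.qExpansion_pow one_pos one_mem_strictPeriods_SL,
    ModularForm.qExpansion_pow one_pos one_mem_strictPeriods_SL, E4_exp, E6_exp,
    ← map_pow, ← map_pow, ← map_sub] at h2
  obtain ⟨D, hD⟩ : ∃ D : PowerSeries ℤ, 5 * sigS 3 + 7 * sigS 5 = 12 * D := by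
    refine ⟨PowerSeries.mk fun n => ((5 * ArithmeticFunction.sigma 3 n +
      7 * ArithmeticFunction.sigma 5 n) / 12 : ℕ), ?_⟩
    ext n
    rw [show (12 : PowerSeries ℤ) = PowerSeries.C 12 from rfl,
      show (5 : PowerSeries ℤ) = PowerSeries.C 5 from rfl,
      show (7 : PowerSeries ℤ) = PowerSeries.C 7 from rfl, map_add, PowerSeries.coeff_C_mul,
      PowerSeries.coeff_C_mul, PowerSeries.coeff_C_mul, PowerSeries.coeff_mk]
    have := Nat.mul_div_cancel' (twelve_dvd n)
    simp only [sigS, PowerSeries.coeff_mk]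
    exact_mod_cast this.symm
  have h3 : (1 + 240 * sigS 3) ^ 3 - (1 - 504 * sigS 5) ^ 2 =
      1728 * (D + 100 * sigS 3 ^ 2 + 8000 * sigS 3 ^ 3 - 147 * sigS 5 ^ 2) := by
    linear_combination 144 * hD
  rw [h3, map_mul] at h2
  have h4 : qExpansion 1 (CuspForm.discriminant : ℍ → ℂ) =
      (D + 100 * sigS 3 ^ 2 + 8000 * sigS 3 ^ 3 - 147 * sigS 5 ^ 2).map (Int.castRingHom ℂ) := by
    ext n
    have := congrArg (PowerSeries.coeff n) h2
    rw [PowerSeries.coeff_smul, map_ofNat,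
      show (1728 : PowerSeries ℂ) = PowerSeries.C 1728 from rfl, PowerSeries.coeff_C_mul] at this
    exact mul_left_cancel₀ (by norm_num) this
  rw [← CuspForm.coe_discriminant, h4]
  exact IntPS.of_map

/-- The j function on the upper half plane. -/
noncomputable def J (z : ℍ) : ℂ := E₄ z ^ 3 / discriminant z

/-- The ring `ℤ[j]`. -/
noncomputable abbrev ZJ : Subalgebra ℤ (ℍ → ℂ) := Algebra.adjoin ℤ {J}

lemma isIntegral_const {c : ℂ} (hc : IsIntegral ℤ c) : IsIntegral ZJ (fun _ : ℍ => c) := by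
  have : IsIntegral ℤ (fun _ : ℍ => c) :=
    hc.map ((Pi.constRingHom ℍ ℂ).toIntAlgHom)
  exact this.tower_top

lemma isIntegral_J : IsIntegral ZJ J :=
  isIntegral_algebraMap (R := ZJ) (x := ⟨J, Algebra.subset_adjoin rfl⟩)

/-- Level one forms of weight `12 m` with integral q-expansion. -/
lemma level_one (m : ℕ) : ∀ (k : ℤ) (_ : k = 12 * m) (F : ModularForm 𝒮ℒ k),
    IntPS (qExpansion 1 F) → IsIntegral ZJ (fun z => F z / discriminant z ^ m) := by
  induction m with
  | zero =>
    intro k hk F hF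
    obtain rfl : k = 0 := by simpa using hk
    obtain ⟨c, hc⟩ := levelOne_weight_zero_const F
    have h0 : IsIntegral ℤ c := by
      have := hF 0
      rw [hc, show (Function.const ℍ c) = c • ((1 : ModularForm 𝒮ℒ 0) : ℍ → ℂ) by
        ext; simp, ModularForm.qExpansion_smul one_pos one_mem_strictPeriods_SL,
        ModularForm.qExpansion_one] at this
      simpa using this
    simpa [hc] using isIntegral_const h0
  | succ m ih =>
    intro k hk F hF
    set c := (qExpansion 1 F).coeff 0 with hc
    have hci : IsIntegral ℤ c := hF 0
    let E : ModularForm 𝒮ℒ k := ModularForm.mcast (by rw [hk]; push_cast; ring)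
      (E₄.pow (3 * (m + 1)))
    have hE : qExpansion 1 E = qExpansion 1 E₄ ^ (3 * (m + 1)) := by
      rw [ModularForm.qExpansion_mcast, ModularForm.qExpansion_pow one_pos one_mem_strictPeriods_SL]
    let G : ModularForm 𝒮ℒ k := F - c • E
    have hG : qExpansion 1 G = qExpansion 1 F - c • qExpansion 1 E := by
      have : (G : ℍ → ℂ) = ⇑F - ⇑(c • E) := rfl
      rw [this, ModularForm.qExpansion_sub one_pos one_mem_strictPeriods_SL,
        show ⇑(c • E) = c • ⇑E from rfl,
        ModularForm.qExpansion_smul one_pos one_mem_strictPeriods_SL]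
    have hG0 : (qExpansion 1 G).coeff 0 = 0 := by
      have h1 : PowerSeries.constantCoeff (qExpansion 1 E₄) = 1 := by
        simpa using E_qExpansion_coeff_zero (k := 4) (by norm_num) ⟨2, rfl⟩
      rw [hG, map_sub, PowerSeries.coeff_smul, hE]
      simp [h1, hc]
    have hGi : IntPS (qExpansion 1 G) := by
      rw [hG, hE]; exact hF.sub ((int_E4.pow _).smul hci)
    have hq := qExpansion_eq_qExpansion_discriminant_mul G hG0
    set K := CuspForm.discriminantEquiv (toCuspForm G hG0) with hK
    have hKi : IntPS (qExpansion 1 K) := by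
      refine IntPS.div int_Delta ?_ discriminant_qExpansion_coeff_one (hq ▸ hGi)
      simpa using CuspFormClass.qExpansion_coeff_zero CuspForm.discriminant one_pos
        one_mem_strictPeriods_SL
    have h1 := ih (k - 12) (by rw [hk]; push_cast; ring) K hKi
    have h2 := ((isIntegral_const hci).mul (isIntegral_J.pow (m + 1))).add h1
    refine (congrArg (IsIntegral ZJ) ?_).mpr h2
    funext z
    have hz := discriminant_ne_zero z
    have e1 : K z = (F z - c * E₄ z ^ (3 * (m + 1))) / discriminant z := by
      have hEz : E z = E₄ z ^ (3 * (m + 1)) := by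
        change (E₄.pow (3 * (m + 1))) z = _
        rw [coe_pow, Pi.pow_apply]
      have hGz : G z = F z - c * E z := rfl
      rw [hK, CuspForm.discriminantEquiv_apply, toCuspForm_apply, hGz, hEz]
    simp only [Pi.add_apply, Pi.mul_apply, Pi.pow_apply, e1, J]
    rw [div_pow, ← pow_mul]
    field_simp
    ring

end SG

namespace SG

/-- Theta function with characteristics. -/
noncomputable def th (b c τ : ℂ) : ℂ :=
  cexp (Real.pi * I * b ^ 2 * τ + 2 * Real.pi * I * b * c) * jacobiTheta₂ (b * τ + c) τ

lemma th_add_left (b c τ : ℂ) : th (b + 1) c τ = th b c τ := by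
  unfold th
  rw [show (b + 1) * τ + c = (b * τ + c) + τ by ring, jacobiTheta₂_add_left', ← mul_assoc,
    ← Complex.exp_add]
  congr 2
  ring

lemma th_add_right (b c τ : ℂ) : th b (c + 1) τ = cexp (2 * Real.pi * I * b) * th b c τ := by
  unfold th
  rw [show b * τ + (c + 1) = (b * τ + c) + 1 by ring, jacobiTheta₂_add_left, ← mul_assoc,
    ← Complex.exp_add]
  congr 2
  ring

lemma th_S (b c τ : ℂ) (hτ : τ ≠ 0) :
    th b c (-1 / τ) = (-I * τ) ^ (1 / 2 : ℂ) * cexp (2 * Real.pi * I * b * c) * th c (-b) τ := by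
  unfold th
  have h := jacobiTheta₂_functional_equation (c * τ + -b) τ
  have h1 : (-I * τ) ^ (1 / 2 : ℂ) ≠ 0 := by
    simp [Complex.cpow_eq_zero_iff, hτ]
  rw [h, show (c * τ + -b) / τ = b * (-1 / τ) + c by field_simp; ring]
  have e : (-I * τ) ^ (1 / 2 : ℂ) * cexp (2 * Real.pi * I * b * c) *
      (cexp (Real.pi * I * c ^ 2 * τ + 2 * Real.pi * I * c * -b) *
      (1 / (-I * τ) ^ (1 / 2 : ℂ) * cexp (-Real.pi * I * (c * τ + -b) ^ 2 / τ) *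
        jacobiTheta₂ (b * (-1 / τ) + c) (-1 / τ))) =
      (cexp (2 * Real.pi * I * b * c) * cexp (Real.pi * I * c ^ 2 * τ + 2 * Real.pi * I * c * -b) *
      cexp (-Real.pi * I * (c * τ + -b) ^ 2 / τ)) * jacobiTheta₂ (b * (-1 / τ) + c) (-1 / τ) := by
    field_simp
  rw [e, ← Complex.exp_add, ← Complex.exp_add]
  congr 2
  field_simp
  ring

lemma th_T (b c τ : ℂ) : th b c (τ + 1) =
    cexp (-Real.pi * I * (b ^ 2 + b)) * th b (c + b + 1 / 2) τ := by
  unfold th jacobiTheta₂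
  rw [← mul_assoc, ← tsum_mul_left, ← tsum_mul_left]
  refine tsum_congr fun n => ?_
  unfold jacobiTheta₂_term
  simp only [← Complex.exp_add]
  rw [Complex.exp_eq_exp_iff_exists_int]
  obtain ⟨m, hm⟩ : ∃ m : ℤ, n ^ 2 - n = 2 * m := (Int.even_mul_pred_self n).two_dvd.imp
    fun m h => by linear_combination h
  have hm' : (n : ℂ) ^ 2 - n = 2 * m := by exact_mod_cast hm
  refine ⟨m, ?_⟩
  linear_combination (Real.pi * I) * hm'

/-- The modular units numerators. -/
noncomputable def hh (N : ℕ) (k l : ℤ) (τ : ℂ) : ℂ :=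
  th ((k : ℂ) / (2 * N)) ((l : ℂ) / (2 * N)) τ ^ (24 * N ^ 2)

lemma hh_add_left (N : ℕ) (hN : N ≠ 0) (k l : ℤ) (τ : ℂ) : hh N (k + 2 * N) l τ = hh N k l τ := by
  have : (N : ℂ) ≠ 0 := by exact_mod_cast hN
  unfold hh
  rw [← th_add_left ((k : ℂ) / (2 * N))]
  congr 2
  push_cast
  field_simp

lemma hh_add_right (N : ℕ) (hN : N ≠ 0) (k l : ℤ) (τ : ℂ) : hh N k (l + 2 * N) τ = hh N k l τ := by
  have : (N : ℂ) ≠ 0 := by exact_mod_cast hN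
  unfold hh
  rw [show ((l + 2 * N : ℤ) : ℂ) / (2 * N) = (l : ℂ) / (2 * N) + 1 by push_cast; field_simp,
    th_add_right, mul_pow, ← Complex.exp_nat_mul]
  rw [show ((24 * N ^ 2 : ℕ) : ℂ) * (2 * Real.pi * I * (k / (2 * N))) =
    ((12 * N * k : ℤ) : ℂ) * (2 * Real.pi * I) by push_cast; field_simp; ring,
    Complex.exp_int_mul_two_pi_mul_I, one_mul]

lemma hh_congr (N : ℕ) (hN : N ≠ 0) {k l k₂ l₂ : ℤ} (hk : (k : ZMod (2 * N)) = k₂) (hl : (l : ZMod (2 * N)) = l₂)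
    (τ : ℂ) : hh N k l τ = hh N k₂ l₂ τ := by
  have P1 : Function.Periodic (fun k : ℤ => hh N k l τ) (2 * N) := fun k => hh_add_left N hN k l τ
  have P2 : Function.Periodic (fun l : ℤ => hh N k₂ l τ) (2 * N) := fun l => hh_add_right N hN k₂ l τ
  rw [ZMod.intCast_eq_intCast_iff_dvd_sub] at hk hl
  obtain ⟨x, hx⟩ := hk
  obtain ⟨y, hy⟩ := hl
  have e1 : hh N (k + x * (2 * N)) l τ = hh N k l τ := P1.int_mul x k
  have e2 : hh N k₂ (l + y * (2 * N)) τ = hh N k₂ l τ := P2.int_mul y l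
  rw [← e1, show k + x * (2 * N) = k₂ by push_cast at hx; linear_combination -hx, ← e2,
    show l + y * (2 * N) = l₂ by push_cast at hy; linear_combination -hy]

lemma hh_S (N : ℕ) (hN : N ≠ 0) (k l : ℤ) (τ : ℂ) (hτ : τ ≠ 0) :
    hh N k l (-1 / τ) = τ ^ (12 * N ^ 2) * hh N l (-k) τ := by
  have : (N : ℂ) ≠ 0 := by exact_mod_cast hN
  unfold hh
  rw [th_S _ _ _ hτ, mul_pow, mul_pow, ← Complex.exp_nat_mul]
  rw [show ((24 * N ^ 2 : ℕ) : ℂ) * (2 * Real.pi * I * (k / (2 * N)) * (l / (2 * N))) =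
    ((6 * k * l : ℤ) : ℂ) * (2 * Real.pi * I) by push_cast; field_simp; ring,
    Complex.exp_int_mul_two_pi_mul_I, mul_one]
  congr 1
  · rw [show 24 * N ^ 2 = 2 * (12 * N ^ 2) by ring, pow_mul,
      show ((-I * τ) ^ (1 / 2 : ℂ)) ^ 2 = -I * τ by
        rw [← Complex.cpow_nat_mul]; norm_num, mul_pow, pow_mul]
    rw [show (-I) ^ 12 = 1 by
      rw [show (-I) ^ 12 = (I ^ 2) ^ 6 by ring, I_sq]; norm_num]
    simp
  · congr 2
    push_cast
    ring

lemma hh_T (N : ℕ) (hN : N ≠ 0) (k l : ℤ) (τ : ℂ) : hh N k l (τ + 1) = hh N k (l + k + N) τ := by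
  have : (N : ℂ) ≠ 0 := by exact_mod_cast hN
  unfold hh
  rw [th_T, mul_pow, ← Complex.exp_nat_mul]
  rw [show ((24 * N ^ 2 : ℕ) : ℂ) * (-Real.pi * I * ((k / (2 * N)) ^ 2 + (k / (2 * N)))) =
    ((-(3 * k ^ 2 + 6 * N * k) : ℤ) : ℂ) * (2 * Real.pi * I) by push_cast; field_simp; ring,
    Complex.exp_int_mul_two_pi_mul_I, one_mul]
  congr 2
  push_cast
  field_simp

lemma th_diff (b c τ : ℂ) (hτ : 0 < τ.im) : DifferentiableAt ℂ (fun τ => th b c τ) τ := by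
  unfold th
  refine DifferentiableAt.mul (by fun_prop) ?_
  have h := (hasFDerivAt_jacobiTheta₂ (b * τ + c) hτ).differentiableAt
  exact h.comp τ (f := fun τ => (b * τ + c, τ)) (by fun_prop)

lemma hh_diff (N : ℕ) (k l : ℤ) (τ : ℂ) (hτ : 0 < τ.im) : DifferentiableAt ℂ (fun τ => hh N k l τ) τ := by
  unfold hh
  exact (th_diff _ _ _ hτ).pow _

end SG

namespace SG
open UpperHalfPlane hiding I
open ModularForm ModularFormClass MatrixGroups EisensteinSeries

lemma hasSum_congr' {α : Type*} {f g : α → ℂ} {a : ℂ} (h : ∀ n, f n = g n) :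
    HasSum f a ↔ HasSum g a := by
  rw [funext h]

/-- Functions with a convergent expansion in `q^(1/H)` with algebraic integer coefficients. -/
def AH (H : ℕ) : Subring (ℍ → ℂ) where
  carrier := {f | ∃ p : ℕ → ℂ, (∀ n, IsIntegral ℤ (p n)) ∧
    ∀ τ : ℍ, HasSum (fun m : ℕ => p m • Function.Periodic.qParam H τ ^ m) (f τ)}
  mul_mem' := by
    rintro f g ⟨p, hp, hf⟩ ⟨r, hr, hg⟩
    refine ⟨fun n => ∑ x ∈ Finset.HasAntidiagonal.antidiagonal n, p x.1 * r x.2,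
      fun n => IsIntegral.sum _ fun x _ => (hp _).mul (hr _), fun τ => ?_⟩
    have h1 := (hf τ).summable.norm
    have h2 := (hg τ).summable.norm
    have h3 := tsum_mul_tsum_eq_tsum_sum_antidiagonal_of_summable_norm h1 h2
    have h4 := (summable_norm_sum_mul_antidiagonal_of_summable_norm h1 h2).of_norm.hasSum
    rw [← h3, (hf τ).tsum_eq, (hg τ).tsum_eq] at h4
    refine (hasSum_congr' fun n => ?_).mp h4
    rw [smul_eq_mul, Finset.sum_mul]
    refine Finset.sum_congr rfl fun x hx => ?_
    rw [← Finset.HasAntidiagonal.mem_antidiagonal.1 hx, pow_add, smul_eq_mul, smul_eq_mul]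
    ring
  one_mem' := by
    refine ⟨fun n => if n = 0 then 1 else 0, fun n => ?_, fun τ => ?_⟩
    · dsimp only
      split_ifs
      · exact isIntegral_one
      · exact isIntegral_zero
    · have := hasSum_ite_eq (0 : ℕ) (1 : ℂ)
      refine (hasSum_congr' fun n => ?_).mp this
      split_ifs with h <;> simp [h]
  add_mem' := by
    rintro f g ⟨p, hp, hf⟩ ⟨r, hr, hg⟩
    refine ⟨fun n => p n + r n, fun n => (hp n).add (hr n), fun τ => ?_⟩
    refine (hasSum_congr' fun n => ?_).mp ((hf τ).add (hg τ))
    rw [add_smul]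
  zero_mem' := ⟨fun _ => 0, fun _ => isIntegral_zero, fun τ => by simp⟩
  neg_mem' := by
    rintro f ⟨p, hp, hf⟩
    refine ⟨fun n => -p n, fun n => (hp n).neg, fun τ => ?_⟩
    refine (hasSum_congr' fun n => ?_).mp ((hf τ).neg)
    simp

lemma mem_AH_of_hasSum (H : ℕ) (f : ℍ → ℂ) (u : ℤ → ℂ) (hu : ∀ n, IsIntegral ℤ (u n))
    (e : ℤ → ℕ) (he : ∀ m, {n | e n = m}.Finite)
    (hf : ∀ τ : ℍ, HasSum (fun n => u n * Function.Periodic.qParam H τ ^ e n) (f τ)) :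
    f ∈ AH H := by
  have hfin : ∀ m, Finite {n // e n = m} := fun m => (he m).to_subtype
  have hfin' : ∀ m, Fintype {n // e n = m} := fun m => Fintype.ofFinite _
  refine ⟨fun m => ∑ n : {n // e n = m}, u n, fun m => IsIntegral.sum _ fun x _ => hu _,
    fun τ => ?_⟩
  have h1 := (Equiv.sigmaFiberEquiv e).hasSum_iff.mpr (hf τ)
  refine h1.sigma fun m => ?_
  rw [smul_eq_mul, Finset.sum_mul]
  have := hasSum_fintype (fun n : {n // e n = m} => u n * Function.Periodic.qParam H τ ^ m)
  refine (hasSum_congr' fun n => ?_).mp this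
  obtain ⟨n, hn⟩ := n
  simp [hn]

lemma th_mem (N : ℕ) (hN : N ≠ 0) (k l : ℤ) :
    (fun τ : ℍ => th ((k : ℂ) / (2 * N)) ((l : ℂ) / (2 * N)) τ) ∈ AH (8 * N ^ 2) := by
  have hN' : (N : ℂ) ≠ 0 := by exact_mod_cast hN
  refine mem_AH_of_hasSum _ _
    (fun n => cexp (2 * Real.pi * I * ((2 * N * n + k) * l / (4 * N ^ 2)))) (fun n => ?_)
    (fun n => ((2 * N * n + k) ^ 2).natAbs) (fun m => ?_) (fun τ => ?_)
  · refine IsIntegral.of_pow (n := 4 * N ^ 2) (by positivity) ?_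
    rw [← Complex.exp_nat_mul, show ((4 * N ^ 2 : ℕ) : ℂ) *
      (2 * Real.pi * I * ((2 * N * n + k) * l / (4 * N ^ 2))) =
      (((2 * N * n + k) * l : ℤ) : ℂ) * (2 * Real.pi * I) by push_cast; field_simp,
      Complex.exp_int_mul_two_pi_mul_I]
    exact isIntegral_one
  · refine Set.Finite.subset (Set.Finite.preimage (f := fun n : ℤ => 2 * N * n + k) ?_
      (Set.finite_Icc (-(m : ℤ)) m)) ?_
    · intro x _ y _ hxy
      have : (2 * (N : ℤ)) ≠ 0 := by positivity
      simpa [hN] using hxy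
    · intro n hn
      have hn : ((2 * N * n + k) ^ 2).natAbs = m := hn
      simp only [Set.mem_preimage, Set.mem_Icc]
      have : (2 * N * n + k) ^ 2 = (m : ℤ) := by
        rw [← hn, Int.natCast_natAbs, abs_of_nonneg (sq_nonneg _)]
      generalize 2 * N * n + k = x at this
      constructor
      · by_contra! h
        nlinarith
      · by_contra! h
        nlinarith
  · have := (hasSum_jacobiTheta₂_term ((k : ℂ) / (2 * N) * τ + (l : ℂ) / (2 * N)) τ.im_pos).mul_left
      (cexp (Real.pi * I * ((k : ℂ) / (2 * N)) ^ 2 * τ +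
        2 * Real.pi * I * ((k : ℂ) / (2 * N)) * ((l : ℂ) / (2 * N))))
    refine (hasSum_congr' fun n => ?_).mp this
    unfold jacobiTheta₂_term Function.Periodic.qParam
    rw [← Complex.exp_nat_mul, ← Complex.exp_add, ← Complex.exp_add]
    congr 1
    have e : ((((2 * N * n + k) ^ 2).natAbs : ℕ) : ℂ) = (2 * N * n + k) ^ 2 := by
      have : ((((2 * N * n + k) ^ 2).natAbs : ℕ) : ℤ) = (2 * N * n + k) ^ 2 := by
        rw [Int.natCast_natAbs, abs_of_nonneg (sq_nonneg _)]
      have h2 := congrArg (Int.cast : ℤ → ℂ) this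
      rw [Int.cast_natCast] at h2
      rw [h2]
      push_cast
      rfl
    rw [e]
    push_cast
    field_simp
    ring

lemma hh_mem (N : ℕ) (hN : N ≠ 0) (k l : ℤ) : (fun τ : ℍ => hh N k l τ) ∈ AH (8 * N ^ 2) :=
  pow_mem (th_mem N hN k l) (24 * N ^ 2)

/-- Modular form with bounded-denominator expansion has integral q-expansion. -/
lemma intPS_of_mem (H : ℕ) (hH : H ≠ 0) (k : ℤ) (F : ModularForm 𝒮ℒ k) (hF : (F : ℍ → ℂ) ∈ AH H) :
    IntPS (qExpansion 1 F) := by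
  obtain ⟨p, hp, hf⟩ := hF
  have hH0 : (0 : ℝ) < H := by positivity
  have hHm : (H : ℝ) ∈ (𝒮ℒ).strictPeriods := by
    have := (𝒮ℒ).strictPeriods.nsmul_mem one_mem_strictPeriods_SL H
    simpa using this
  have h1 : ∀ m, p m = (qExpansion H F).coeff m :=
    fun m => _root_.UpperHalfPlane.qExpansion_coeff_unique (f := F) hH0
      (ModularFormClass.analyticAt_cuspFunction_zero _ hH0 hHm) hf m
  have h2 := _root_.UpperHalfPlane.qExpansion_coeff_unique (f := F)
    (c := fun m => if H ∣ m then (qExpansion 1 F).coeff (m / H) else 0) hH0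
    (ModularFormClass.analyticAt_cuspFunction_zero _ hH0 hHm) (fun τ => ?_)
  · intro n
    have := h2 (H * n)
    rw [← h1] at this
    simp only [dvd_mul_right, if_true, Nat.mul_div_cancel_left n (Nat.pos_of_ne_zero hH)] at this
    rw [this]; exact hp _
  · have h3 := ModularForm.hasSum_qExpansion F one_pos one_mem_strictPeriods_SL τ
    have hinj : Function.Injective (fun n : ℕ => H * n) := fun a b h => by
      simpa [hH] using h
    rw [← hinj.hasSum_iff]
    · refine (hasSum_congr' fun n => ?_).mp h3
      simp only [Function.comp_apply, dvd_mul_right, if_true,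
        Nat.mul_div_cancel_left n (Nat.pos_of_ne_zero hH), pow_mul]
      congr 2
      unfold Function.Periodic.qParam
      rw [← Complex.exp_nat_mul]
      congr 1
      have : (H : ℂ) ≠ 0 := by exact_mod_cast hH
      push_cast
      field_simp
    · intro m hm
      rw [if_neg, zero_smul]
      rintro ⟨n, rfl⟩
      exact hm ⟨n, rfl⟩

end SG

namespace SG
open UpperHalfPlane hiding I
open ModularForm ModularFormClass MatrixGroups EisensteinSeries

/-- Index set. -/
abbrev Ix (N : ℕ) := ZMod (2 * N) × ZMod (2 * N)

/-- The function `hh` indexed by residue classes. -/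
noncomputable def hz (N : ℕ) (p : Ix N) (τ : ℂ) : ℂ := hh N (p.1.val : ℤ) (p.2.val : ℤ) τ

/-- Permutation for `S`. -/
def permS (N : ℕ) : Ix N ≃ Ix N where
  toFun p := (p.2, -p.1)
  invFun p := (-p.2, p.1)
  left_inv p := by simp
  right_inv p := by simp

/-- Permutation for `T`. -/
def permT (N : ℕ) : Ix N ≃ Ix N where
  toFun p := (p.1, p.2 + p.1 + N)
  invFun p := (p.1, p.2 - p.1 - N)
  left_inv p := by ext <;> simp; ring
  right_inv p := by ext <;> simp; ring

lemma hz_eq (N : ℕ) (hN : N ≠ 0) (k l : ℤ) (τ : ℂ) :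
    hz N ((k : ZMod (2 * N)), (l : ZMod (2 * N))) τ = hh N k l τ := by
  have : NeZero (2 * N) := ⟨by omega⟩
  exact hh_congr N hN (by simp) (by simp) τ

lemma hz_S (N : ℕ) (hN : N ≠ 0) (p : Ix N) (τ : ℂ) (hτ : τ ≠ 0) :
    hz N p (-1 / τ) = τ ^ (12 * N ^ 2) * hz N (permS N p) τ := by
  have : NeZero (2 * N) := ⟨by omega⟩
  rw [hz, hh_S N hN _ _ _ hτ, ← hz_eq N hN]
  simp [permS]

lemma hz_T (N : ℕ) (hN : N ≠ 0) (p : Ix N) (τ : ℂ) :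
    hz N p (τ + 1) = hz N (permT N p) τ := by
  have : NeZero (2 * N) := ⟨by omega⟩
  rw [hz, hh_T N hN _ _ _, ← hz_eq N hN]
  simp [permT]

/-- Elementary symmetric functions. -/
noncomputable def es (N : ℕ) [Fintype (Ix N)] (i : ℕ) (τ : ℂ) : ℂ :=
  ∑ t ∈ Finset.powersetCard i (Finset.univ : Finset (Ix N)), ∏ p ∈ t, hz N p τ

lemma esum_perm {σ : Type*} [Fintype σ] (e : σ ≃ σ) (f : σ → ℂ) (i : ℕ) :
    ∑ t ∈ Finset.powersetCard i (Finset.univ : Finset σ), ∏ p ∈ t, f (e p) =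
    ∑ t ∈ Finset.powersetCard i (Finset.univ : Finset σ), ∏ p ∈ t, f p := by
  have h := congrArg (MvPolynomial.aeval f) (MvPolynomial.rename_esymm σ ℤ i e)
  rw [MvPolynomial.aeval_rename] at h
  simpa [MvPolynomial.esymm, map_sum, map_prod] using h

lemma es_S (N : ℕ) (hN : N ≠ 0) [Fintype (Ix N)] (i : ℕ) (τ : ℂ) (hτ : τ ≠ 0) :
    es N i (-1 / τ) = τ ^ (12 * (N ^ 2 * i)) * es N i τ := by
  unfold es
  rw [← esum_perm (permS N) (fun p => hz N p τ), Finset.mul_sum]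
  refine Finset.sum_congr rfl fun t ht => ?_
  simp only [hz_S N hN _ τ hτ, Finset.prod_mul_distrib, Finset.prod_const,
    (Finset.mem_powersetCard.1 ht).2]
  rw [← pow_mul, mul_assoc]

lemma es_T (N : ℕ) (hN : N ≠ 0) [Fintype (Ix N)] (i : ℕ) (τ : ℂ) :
    es N i (τ + 1) = es N i τ := by
  unfold es
  rw [← esum_perm (permT N) (fun p => hz N p τ)]
  simp only [hz_T N hN]

lemma es_mem (N : ℕ) (hN : N ≠ 0) [Fintype (Ix N)] (i : ℕ) :
    (fun τ : ℍ => es N i τ) ∈ AH (8 * N ^ 2) := by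
  have : (fun τ : ℍ => es N i τ) =
      ∑ t ∈ Finset.powersetCard i (Finset.univ : Finset (Ix N)), ∏ p ∈ t,
        (fun τ : ℍ => hz N p τ) := by
    funext τ
    simp [es, Finset.sum_apply, Finset.prod_apply]
  rw [this]
  exact sum_mem fun t _ => prod_mem fun p _ => hh_mem N hN _ _

/-- The elementary symmetric functions as modular forms. -/
noncomputable def esForm (N : ℕ) (hN : N ≠ 0) [Fintype (Ix N)] (i : ℕ) :
    ModularForm 𝒮ℒ ((12 * (N ^ 2 * i) : ℕ) : ℤ) :=
  have hS : (fun τ : ℍ => es N i τ) ∣[((12 * (N ^ 2 * i) : ℕ) : ℤ)] ModularGroup.S =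
      fun τ : ℍ => es N i τ := by
    ext z
    rw [SL_slash_apply, UpperHalfPlane.modular_S_smul]
    have hz0 : (z : ℂ) ≠ 0 := z.ne_zero
    have h := es_S N hN i z hz0
    have hd : denom ModularGroup.S z = z := ModularGroup.denom_S z
    rw [hd]
    change es N i ((-(z : ℂ))⁻¹) * _ = _
    rw [show (-(z : ℂ))⁻¹ = -1 / z by field_simp, h, zpow_neg, zpow_natCast]
    field_simp
  have hT : (fun τ : ℍ => es N i τ) ∣[((12 * (N ^ 2 * i) : ℕ) : ℤ)] ModularGroup.T =
      fun τ : ℍ => es N i τ := by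
    ext z
    rw [SL_slash_apply, UpperHalfPlane.modular_T_smul]
    have hd : denom ModularGroup.T z = 1 := by
      rw [ModularGroup.denom_apply]; simp [ModularGroup.T]
    rw [hd, one_zpow, mul_one]
    change es N i _ = es N i _
    rw [← es_T N hN i z, coe_vadd, add_comm]
    simp
  { toFun := fun τ => es N i τ
    slash_action_eq' := fun A hA => by
      obtain ⟨A, rfl⟩ := hA
      exact SlashInvariantForm.slash_action_generators_SL2Z hS hT A
    holo' := by
      rw [UpperHalfPlane.mdifferentiable_iff]
      refine .congr (f := fun z => es N i z) (fun z hz ↦ DifferentiableAt.differentiableWithinAt ?_)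
        fun z hz ↦ ?_
      · unfold es
        refine DifferentiableAt.fun_sum fun t _ => DifferentiableAt.fun_finsetProd fun p _ => ?_
        exact hh_diff N _ _ _ hz
      · simp [ofComplex_apply_of_im_pos hz]
    bdd_at_cusps' := fun {c} hc => by
      rw [Subgroup.IsArithmetic.isCusp_iff_isCusp_SL2Z] at hc
      rw [OnePoint.isBoundedAt_iff_forall_SL2Z hc]
      intro γ _
      rw [SlashInvariantForm.slash_action_generators_SL2Z hS hT]
      obtain ⟨p, _, hp⟩ := es_mem N hN i
      have h8 : (0 : ℝ) < ((8 * N ^ 2 : ℕ) : ℝ) := by positivity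
      exact isBoundedAtImInfty_of_hasSum_qExpansion h8 hp }

lemma es_integral (N : ℕ) (hN : N ≠ 0) [Fintype (Ix N)] (i : ℕ) :
    IsIntegral ZJ (fun z : ℍ => es N i z / discriminant z ^ (N ^ 2 * i)) :=
  level_one (N ^ 2 * i) _ (by push_cast; ring) (esForm N hN i)
    (intPS_of_mem (8 * N ^ 2) (by positivity) _ _ (es_mem N hN i))

lemma integral_of_esymm {R A σ : Type*} [CommRing R] [CommRing A] [Algebra R A] [Fintype σ]
    (x : σ → A)
    (h : ∀ i, IsIntegral R (∑ t ∈ Finset.powersetCard i (Finset.univ : Finset σ), ∏ p ∈ t, x p))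
    (p : σ) : IsIntegral R (x p) := by
  let B := integralClosure R A
  let s : Multiset A := Finset.univ.val.map x
  have hs : ∀ i, IsIntegral R (s.esymm i) := by
    intro i
    have := h i
    rwa [← Finset.esymm_map_val] at this
  let Q : Polynomial B := ∑ j ∈ Finset.range (Multiset.card s + 1),
    (-1) ^ j * (Polynomial.C (⟨s.esymm j, hs j⟩ : B) * Polynomial.X ^ (Multiset.card s - j))
  have hQ : Q.map (algebraMap B A) = (s.map fun t => Polynomial.X - Polynomial.C t).prod := by
    rw [Multiset.prod_X_sub_X_eq_sum_esymm]
    simp only [Q, Polynomial.map_sum, Polynomial.map_mul, Polynomial.map_pow, Polynomial.map_neg,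
      Polynomial.map_one, Polynomial.map_C, Polynomial.map_X]
    rfl
  have hmon : Q.Monic := by
    refine Polynomial.monic_of_injective (f := algebraMap B A) Subtype.val_injective ?_
    rw [hQ]
    exact Polynomial.monic_multiset_prod_of_monic _ _ fun t _ => Polynomial.monic_X_sub_C t
  have hxI : IsIntegral B (x p) := by
    refine ⟨Q, hmon, ?_⟩
    rw [← Polynomial.eval_map, hQ, Polynomial.eval_multiset_prod]
    refine Multiset.prod_eq_zero ?_
    simp only [s, Multiset.map_map, Multiset.mem_map]
    exact ⟨p, Finset.mem_univ_val p, by simp⟩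
  exact isIntegral_trans (R := R) (A := B) _ hxI

lemma hh_integral (N : ℕ) (hN : N ≠ 0) (k l : ℤ) :
    IsIntegral ZJ (fun z : ℍ => hh N k l z / discriminant z ^ (N ^ 2)) := by
  have : NeZero (2 * N) := ⟨by omega⟩
  have h := integral_of_esymm (R := ZJ)
    (fun (p : Ix N) (z : ℍ) => hz N p z / discriminant z ^ (N ^ 2)) (fun i => ?_)
    ((k : ZMod (2 * N)), (l : ZMod (2 * N)))
  · simpa only [hz_eq N hN] using h
  · refine (congrArg (IsIntegral ZJ) ?_).mpr (es_integral N hN i)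
    funext z
    simp only [Finset.sum_apply, Finset.prod_apply, es]
    rw [Finset.sum_div]
    refine Finset.sum_congr rfl fun t ht => ?_
    rw [Finset.prod_div_distrib, Finset.prod_const, (Finset.mem_powersetCard.1 ht).2, pow_mul]

end SG

namespace SG
open Filter Topology

/-- `(q;q)_k`. -/
noncomputable def poch (q : ℂ) (k : ℕ) : ℂ := ∏ i ∈ Finset.range k, (1 - q ^ (i + 1))

/-- `1/(q;q)_k`, zero for negative `k`. -/
noncomputable def rpoch (q : ℂ) (k : ℤ) : ℂ := if k < 0 then 0 else (poch q k.toNat)⁻¹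

lemma one_sub_ne (q : ℂ) (hq : ‖q‖ < 1) (i : ℕ) : 1 - q ^ (i + 1) ≠ 0 := by
  intro h
  have h1 : q ^ (i + 1) = 1 := (sub_eq_zero.1 h).symm
  have h2 : ‖q‖ ^ (i + 1) = 1 := by rw [← norm_pow, h1, norm_one]
  exact (pow_lt_one₀ (norm_nonneg q) hq (Nat.succ_ne_zero i)).ne h2

lemma poch_ne (q : ℂ) (hq : ‖q‖ < 1) (k : ℕ) : poch q k ≠ 0 :=
  Finset.prod_ne_zero_iff.2 fun i _ => one_sub_ne q hq i

lemma rpoch_rec (q : ℂ) (hq : ‖q‖ < 1) (k : ℤ) :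
    rpoch q (k - 1) = (1 - q ^ k) * rpoch q k := by
  unfold rpoch
  rcases lt_trichotomy k 0 with h | rfl | h
  · rw [if_pos (by omega), if_pos h, mul_zero]
  · simp
  · rw [if_neg (by omega), if_neg (by omega)]
    obtain ⟨n, rfl⟩ : ∃ n : ℕ, k = (n + 1 : ℕ) := ⟨k.toNat - 1, by omega⟩
    rw [show (((n + 1 : ℕ) : ℤ) - 1).toNat = n by omega, show ((n + 1 : ℕ) : ℤ).toNat = n + 1 by omega,
      zpow_natCast]
    have h1 := one_sub_ne q hq n
    have h2 := poch_ne q hq n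
    rw [poch, poch, Finset.prod_range_succ]
    rw [poch] at h2
    field_simp

/-- Central Gaussian binomials. -/
noncomputable def cc (q : ℂ) (n : ℕ) (m : ℤ) : ℂ :=
  poch q (2 * n) * rpoch q (n + m) * rpoch q (n - m)

lemma cc_rec (q : ℂ) (hq0 : q ≠ 0) (hq : ‖q‖ < 1) (n : ℕ) (m : ℤ) :
    cc q (n + 1) m = (1 + q ^ (2 * n + 1)) * cc q n m + q ^ ((n : ℤ) + 1 - m) * cc q n (m - 1) +
      q ^ ((n : ℤ) + 1 + m) * cc q n (m + 1) := by
  unfold cc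
  have e1 := rpoch_rec q hq (n + 1 + m)
  have e2 := rpoch_rec q hq (n + 1 - m)
  have e3 := rpoch_rec q hq (n + m)
  have e4 := rpoch_rec q hq (n - m)
  have hP : poch q (2 * (n + 1)) = poch q (2 * n) * (1 - q ^ (2 * n + 1)) * (1 - q ^ (2 * n + 1) * q) := by
    rw [show 2 * (n + 1) = 2 * n + 1 + 1 by ring, poch, Finset.prod_range_succ,
      Finset.prod_range_succ, ← pow_succ]
    rfl
  have hA : q ^ ((n : ℤ) + m) = q ^ ((n : ℤ) + 1 + m) / q := by
    rw [eq_div_iff hq0, ← zpow_add_one₀ hq0]; congr 1; ring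
  have hB : q ^ ((n : ℤ) - m) = q ^ ((n : ℤ) + 1 - m) / q := by
    rw [eq_div_iff hq0, ← zpow_add_one₀ hq0]; congr 1; ring
  have hAB : q ^ (2 * n + 1) = q ^ ((n : ℤ) + 1 + m) * q ^ ((n : ℤ) + 1 - m) / q := by
    rw [eq_div_iff hq0, ← zpow_add₀ hq0, ← pow_succ, ← zpow_natCast]; congr 1; push_cast; ring
  rw [show (n : ℤ) + 1 + m - 1 = n + m by ring] at e1
  rw [show (n : ℤ) + 1 - m - 1 = n - m by ring] at e2
  rw [e1, hA] at e3
  rw [e2, hB] at e4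
  rw [hP, show ((n + 1 : ℕ) : ℤ) + m = n + 1 + m by push_cast; ring,
    show ((n + 1 : ℕ) : ℤ) - m = n + 1 - m by push_cast; ring,
    show (n : ℤ) + (m - 1) = n + m - 1 by ring, show (n : ℤ) - (m - 1) = n + 1 - m by ring,
    show (n : ℤ) + (m + 1) = n + 1 + m by ring, show (n : ℤ) - (m + 1) = n - m - 1 by ring,
    e3, e4, e1, e2, hAB]
  field_simp
  ring

lemma fin_triple (p x : ℂ) (hp0 : p ≠ 0) (hp : ‖p‖ < 1) (hx : x ≠ 0) (n : ℕ) :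
    HasSum (fun m : ℤ => cc (p ^ 2) n m * (p ^ (m ^ 2) * x ^ m))
      (∏ k ∈ Finset.range n, (1 + x * p ^ (2 * k + 1)) * (1 + x⁻¹ * p ^ (2 * k + 1))) := by
  have hq0 : p ^ 2 ≠ 0 := pow_ne_zero 2 hp0
  have hq : ‖p ^ 2‖ < 1 := by
    rw [norm_pow]; exact pow_lt_one₀ (norm_nonneg p) hp two_ne_zero
  induction n with
  | zero =>
    have : HasSum (fun m : ℤ => if m = 0 then (1 : ℂ) else 0) 1 := hasSum_ite_eq 0 1
    rw [Finset.prod_range_zero]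
    refine (hasSum_congr' fun m => ?_).mp this
    rcases lt_trichotomy m 0 with h | rfl | h
    · simp [cc, rpoch, h, h.ne]
    · simp [cc, rpoch, poch]
    · simp [cc, rpoch, h, h.ne']
  | succ n ih =>
    rw [Finset.prod_range_succ]
    set F := ∏ k ∈ Finset.range n, (1 + x * p ^ (2 * k + 1)) * (1 + x⁻¹ * p ^ (2 * k + 1))
    have h1 := ih.mul_left (1 + (p ^ 2) ^ (2 * n + 1))
    have h2 := ((Equiv.subRight (1 : ℤ)).hasSum_iff.mpr ih).mul_left (x * p ^ (2 * n + 1))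
    have h3 := ((Equiv.addRight (1 : ℤ)).hasSum_iff.mpr ih).mul_left (x⁻¹ * p ^ (2 * n + 1))
    have h4 := (h1.add h2).add h3
    have e : (1 + (p ^ 2) ^ (2 * n + 1)) * F + x * p ^ (2 * n + 1) * F + x⁻¹ * p ^ (2 * n + 1) * F =
        F * ((1 + x * p ^ (2 * n + 1)) * (1 + x⁻¹ * p ^ (2 * n + 1))) := by
      field_simp
      ring
    rw [e] at h4
    refine (hasSum_congr' fun m => ?_).mp h4
    rw [cc_rec _ hq0 hq]
    simp only [Function.comp_apply, Equiv.subRight_apply, Equiv.coe_addRight]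
    have f1 : (p ^ 2) ^ ((n : ℤ) + 1 - m) * p ^ (m ^ 2) = p ^ (2 * n + 1) * p ^ ((m - 1) ^ 2) := by
      rw [← zpow_natCast, ← zpow_mul, ← zpow_add₀ hp0, ← zpow_natCast, ← zpow_add₀ hp0]
      congr 1; push_cast; ring
    have f2 : (p ^ 2) ^ ((n : ℤ) + 1 + m) * p ^ (m ^ 2) = p ^ (2 * n + 1) * p ^ ((m + 1) ^ 2) := by
      rw [← zpow_natCast, ← zpow_mul, ← zpow_add₀ hp0, ← zpow_natCast, ← zpow_add₀ hp0]
      congr 1; push_cast; ring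
    have f3 : x * x ^ (m - 1) = x ^ m := by rw [← zpow_one_add₀ hx]; congr 1; ring
    have f4 : x⁻¹ * x ^ (m + 1) = x ^ m := by rw [zpow_add_one₀ hx]; field_simp
    linear_combination (-(cc (p ^ 2) n (m - 1) * x ^ m)) * f1 - (cc (p ^ 2) n (m + 1) * x ^ m) * f2 +
      (cc (p ^ 2) n (m - 1) * p ^ (2 * n + 1) * p ^ ((m - 1) ^ 2)) * f3 +
      (cc (p ^ 2) n (m + 1) * p ^ (2 * n + 1) * p ^ ((m + 1) ^ 2)) * f4

lemma triple_abs (p x θ : ℂ) (hp0 : p ≠ 0) (hp : ‖p‖ < 1) (hx : x ≠ 0)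
    (hθ : HasSum (fun m : ℤ => p ^ (m ^ 2) * x ^ m) θ) :
    (∏' k : ℕ, (1 + x * p ^ (2 * k + 1)) * (1 + x⁻¹ * p ^ (2 * k + 1))) *
      ∏' k : ℕ, (1 - (p ^ 2) ^ (k + 1)) = θ := by
  have hq : ‖p ^ 2‖ < 1 := by
    rw [norm_pow]; exact pow_lt_one₀ (norm_nonneg p) hp two_ne_zero
  set q := p ^ 2 with hqdef
  -- the Euler product
  have sq : Summable fun k : ℕ => ‖-q ^ (k + 1)‖ := by
    simp only [norm_neg, norm_pow]
    exact (summable_nat_add_iff 1).2 (summable_geometric_of_lt_one (norm_nonneg q) hq)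
  have mq : Multipliable fun k : ℕ => (1 - q ^ (k + 1)) := by
    simpa [sub_eq_add_neg] using multipliable_one_add_of_summable sq
  have hP : Tendsto (poch q) atTop (𝓝 (∏' k : ℕ, (1 - q ^ (k + 1)))) :=
    mq.hasProd.tendsto_prod_nat
  set E := ∏' k : ℕ, (1 - q ^ (k + 1)) with hE
  have hE0 : E ≠ 0 := by
    have := tprod_one_add_ne_zero_of_summable (f := fun k : ℕ => -q ^ (k + 1))
      (fun k => by simpa [sub_eq_add_neg] using one_sub_ne q hq k) sq
    simpa [sub_eq_add_neg, hE] using this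
  have hPi : Tendsto (fun k => (poch q k)⁻¹) atTop (𝓝 E⁻¹) := hP.inv₀ hE0
  obtain ⟨C1, hC1⟩ := (Metric.isBounded_range_of_tendsto _ hP).exists_norm_le
  obtain ⟨C2, hC2⟩ := (Metric.isBounded_range_of_tendsto _ hPi).exists_norm_le
  have hC1' : ∀ k, ‖poch q k‖ ≤ C1 := fun k => hC1 _ ⟨k, rfl⟩
  have hC2' : ∀ k, ‖rpoch q k‖ ≤ C2 := fun k => by
    unfold rpoch
    split_ifs
    · rw [norm_zero]; exact (norm_nonneg _).trans (hC2 _ ⟨0, rfl⟩)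
    · exact hC2 _ ⟨_, rfl⟩
  have h10 : 0 ≤ C1 := (norm_nonneg _).trans (hC1' 0)
  have h20 : 0 ≤ C2 := (norm_nonneg _).trans (hC2' 0)
  have hcb : ∀ n m, ‖cc q n m‖ ≤ C1 * C2 * C2 := fun n m => by
    unfold cc
    rw [norm_mul, norm_mul]
    gcongr
    · exact hC1' _
    · exact hC2' _
    · exact hC2' _
  have hcl : ∀ m, Tendsto (fun n => cc q n m) atTop (𝓝 E⁻¹) := fun m => by
    have t1 : Tendsto (fun n : ℕ => poch q (2 * n)) atTop (𝓝 E) :=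
      hP.comp (tendsto_atTop_mono (fun n => by omega : ∀ n, n ≤ 2 * n) tendsto_id)
    have t2 : ∀ m : ℤ, Tendsto (fun n : ℕ => rpoch q (n + m)) atTop (𝓝 E⁻¹) := fun m => by
      have u : Tendsto (fun n : ℕ => ((n : ℤ) + m).toNat) atTop atTop := by
        refine tendsto_atTop.2 fun b => ?_
        filter_upwards [eventually_ge_atTop (b + m.natAbs)] with n hn
        omega
      refine (hPi.comp u).congr' ?_
      filter_upwards [eventually_ge_atTop m.natAbs] with n hn
      rw [rpoch, if_neg (by omega)]
      rfl
    have := (t1.mul (t2 m)).mul (t2 (-m))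
    rw [mul_inv_cancel₀ hE0, one_mul] at this
    exact this
  have hlim : Tendsto (fun n : ℕ => ∑' m : ℤ, cc q n m * (p ^ (m ^ 2) * x ^ m)) atTop
      (𝓝 (∑' m : ℤ, E⁻¹ * (p ^ (m ^ 2) * x ^ m))) := by
    refine tendsto_tsum_of_dominated_convergence
      (bound := fun m : ℤ => C1 * C2 * C2 * ‖p ^ (m ^ 2) * x ^ m‖)
      (hθ.summable.norm.mul_left _) (fun m => (hcl m).mul_const _) ?_
    filter_upwards with n m
    rw [norm_mul]
    exact mul_le_mul_of_nonneg_right (hcb n m) (norm_nonneg _)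
  have mult : ∀ y : ℂ, Multipliable fun k : ℕ => (1 + y * p ^ (2 * k + 1)) := fun y => by
    refine multipliable_one_add_of_summable ?_
    have e : ∀ k : ℕ, ‖y * p ^ (2 * k + 1)‖ = ‖y‖ * ‖p‖ * ‖q‖ ^ k := fun k => by
      rw [hqdef, norm_mul, norm_pow, norm_pow, pow_succ, pow_mul]; ring
    simp only [e]
    exact (summable_geometric_of_lt_one (norm_nonneg q) hq).mul_left _
  have hF := ((mult x).mul (mult x⁻¹)).hasProd.tendsto_prod_nat
  rw [tsum_mul_left, hθ.tsum_eq] at hlim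
  have := tendsto_nhds_unique (hF.congr fun n => (fin_triple p x hp0 hp hx n).tsum_eq.symm) hlim
  rw [this]
  field_simp

lemma triple (z τ : ℂ) (hτ : 0 < τ.im) :
    (∏' k : ℕ, (1 + cexp (2 * Real.pi * I * (z + (k + 1 / 2) * τ))) *
      (1 + cexp (2 * Real.pi * I * (-z + (k + 1 / 2) * τ)))) *
      ∏' k : ℕ, (1 - cexp (2 * Real.pi * I * τ) ^ (k + 1)) = jacobiTheta₂ z τ := by
  have h := triple_abs (cexp (Real.pi * I * τ)) (cexp (2 * Real.pi * I * z)) (jacobiTheta₂ z τ)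
    (Complex.exp_ne_zero _) ?_ (Complex.exp_ne_zero _) ?_
  · rw [← h]
    congr 1
    · refine tprod_congr fun k => ?_
      rw [← Complex.exp_neg, ← Complex.exp_nat_mul, ← Complex.exp_add, ← Complex.exp_add]
      congr 3
      · push_cast; ring
      · push_cast; ring
    · refine tprod_congr fun k => ?_
      rw [← Complex.exp_nat_mul (Real.pi * I * τ) 2]
      congr 3
      push_cast; ring
  · rw [Complex.norm_exp]
    simp
    positivity
  · refine (hasSum_congr' fun m => ?_).mp (hasSum_jacobiTheta₂_term z hτ)
    rw [jacobiTheta₂_term, ← Complex.exp_int_mul, ← Complex.exp_int_mul, ← Complex.exp_add]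
    congr 1
    push_cast
    ring

end SG

namespace SG
open UpperHalfPlane hiding I
open ModularForm ModularFormClass MatrixGroups EisensteinSeries

lemma siegel_th (a₁ a₂ : ℝ) (τ : ℂ) (hτ : 0 < τ.im) :
    siegel a₁ a₂ τ * ModularForm.eta τ * cexp (2 * Real.pi * I * ((a₁ : ℂ) - 1 / 2) * ((a₂ : ℂ) + 1 / 2)) =
      -cexp (Real.pi * I * (a₂ : ℂ) * ((a₁ : ℂ) - 1)) *
        th ((a₁ : ℂ) - 1 / 2) ((a₂ : ℂ) + 1 / 2) τ := by
  have h := triple (((a₁ : ℂ) - 1 / 2) * τ + ((a₂ : ℂ) + 1 / 2)) τ hτ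
  have e1 : ∀ k : ℕ, (1 + cexp (2 * Real.pi * I *
      ((((a₁ : ℂ) - 1 / 2) * τ + ((a₂ : ℂ) + 1 / 2)) + (k + 1 / 2) * τ))) *
      (1 + cexp (2 * Real.pi * I *
      (-(((a₁ : ℂ) - 1 / 2) * τ + ((a₂ : ℂ) + 1 / 2)) + (k + 1 / 2) * τ))) =
      (1 - qpow τ ((k : ℝ) + a₁) * Complex.exp (2 * Real.pi * I * (a₂ : ℂ))) *
        (1 - qpow τ ((k : ℝ) + 1 - a₁) * Complex.exp (-(2 * Real.pi * I * (a₂ : ℂ)))) := by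
    intro k
    have p1 : cexp (2 * Real.pi * I *
      ((((a₁ : ℂ) - 1 / 2) * τ + ((a₂ : ℂ) + 1 / 2)) + (k + 1 / 2) * τ)) =
      -(qpow τ ((k : ℝ) + a₁) * Complex.exp (2 * Real.pi * I * (a₂ : ℂ))) := by
      rw [qpow, ← Complex.exp_add, ← Complex.exp_add_pi_mul_I]
      congr 1
      push_cast
      ring
    have p2 : cexp (2 * Real.pi * I *
      (-(((a₁ : ℂ) - 1 / 2) * τ + ((a₂ : ℂ) + 1 / 2)) + (k + 1 / 2) * τ)) =
      -(qpow τ ((k : ℝ) + 1 - a₁) * Complex.exp (-(2 * Real.pi * I * (a₂ : ℂ)))) := by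
      rw [qpow, ← Complex.exp_add, ← Complex.exp_sub_pi_mul_I]
      congr 1
      push_cast
      ring
    rw [p1, p2, ← sub_eq_add_neg, ← sub_eq_add_neg]
  rw [tprod_congr e1] at h
  rw [th, ← h, siegel, ModularForm.eta, Complex.exp_add]
  simp only [eta_q_eq_pow]
  have e2 : cexp (Real.pi * I * ((a₁ : ℂ) - 1 / 2) ^ 2 * τ) =
      qpow τ (B2 a₁ / 2) * Function.Periodic.qParam 24 τ := by
    rw [qpow, Function.Periodic.qParam, ← Complex.exp_add, B2]
    congr 1
    push_cast
    ring
  rw [e2]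
  ring

lemma siegel_pow (N : ℕ) (hN : N ≠ 0) (k l : ℤ) (z : ℍ) :
    siegel ((k : ℝ) / N) ((l : ℝ) / N) z ^ (24 * N ^ 2) =
      hh N (2 * k - N) (2 * l + N) z / discriminant z ^ (N ^ 2) := by
  have hN' : (N : ℂ) ≠ 0 := by exact_mod_cast hN
  have h := congrArg (· ^ (24 * N ^ 2)) (siegel_th ((k : ℝ) / N) ((l : ℝ) / N) z z.im_pos)
  simp only [mul_pow] at h
  rw [← Complex.exp_nat_mul, neg_pow, ← Complex.exp_nat_mul] at h
  have e1 : cexp (((24 * N ^ 2 : ℕ) : ℂ) * (2 * Real.pi * I * ((((k : ℝ) / N : ℝ) : ℂ) - 1 / 2) *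
      ((((l : ℝ) / N : ℝ) : ℂ) + 1 / 2))) = 1 := by
    rw [Complex.exp_eq_one_iff]
    refine ⟨6 * (2 * k - N) * (2 * l + N), ?_⟩
    push_cast
    field_simp
    ring
  have e2 : cexp (((24 * N ^ 2 : ℕ) : ℂ) * (Real.pi * I * (((l : ℝ) / N : ℝ) : ℂ) *
      ((((k : ℝ) / N : ℝ) : ℂ) - 1))) = 1 := by
    rw [Complex.exp_eq_one_iff]
    refine ⟨12 * l * (k - N), ?_⟩
    push_cast
    field_simp
    ring
  have e3 : (-1 : ℂ) ^ (24 * N ^ 2) = 1 := Even.neg_one_pow ⟨12 * N ^ 2, by ring⟩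
  rw [e1, e2, e3, mul_one, one_mul, one_mul] at h
  rw [eq_div_iff (pow_ne_zero _ (discriminant_ne_zero z)), discriminant, ← pow_mul, h, hh]
  congr 2
  · push_cast; field_simp
  · push_cast; field_simp

lemma siegel_integral (a₁ a₂ : ℚ) :
    IsIntegral ZJ (fun z : ℍ => siegel (a₁ : ℝ) (a₂ : ℝ) z) := by
  set N := a₁.den * a₂.den with hNdef
  have hN : N ≠ 0 := mul_ne_zero a₁.den_nz a₂.den_nz
  have d1 : (a₁.den : ℝ) ≠ 0 := by exact_mod_cast a₁.den_nz
  have d2 : (a₂.den : ℝ) ≠ 0 := by exact_mod_cast a₂.den_nz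
  have h1 : (a₁ : ℝ) = ((a₁.num * a₂.den : ℤ) : ℝ) / N := by
    rw [hNdef, Rat.cast_def]; push_cast; field_simp
  have h2 : (a₂ : ℝ) = ((a₂.num * a₁.den : ℤ) : ℝ) / N := by
    rw [hNdef, Rat.cast_def]; push_cast; field_simp
  refine IsIntegral.of_pow (n := 24 * N ^ 2) (by positivity) ?_
  convert hh_integral N hN (2 * (a₁.num * a₂.den) - N) (2 * (a₂.num * a₁.den) + N) using 1
  funext z
  rw [Pi.pow_apply, h1, h2]
  exact siegel_pow N hN _ _ z

lemma jfun_eq (z : ℍ) : jfun z = J z := by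
  have hd : Delta z = (2 * (Real.pi : ℂ)) ^ 12 * discriminant z := by
    rw [Delta, discriminant_eq_q_prod, Function.Periodic.qParam, mul_assoc]
    simp [eta_q_eq_pow]
  have hc : 12 * c2 z = (2 * (Real.pi : ℂ)) ^ 4 * E₄ z := by
    have hE : E₄ z = 1 - (2 * (4 : ℕ) / bernoulli 4) * ∑' n : ℕ+, (ArithmeticFunction.sigma (4 - 1) n) *
        cexp (2 * Real.pi * I * z) ^ (n : ℤ) :=
      EisensteinSeries.q_expansion_bernoulli (k := 4) (by norm_num) (by decide) z
    have hs := tsum_pow_div_one_sub_eq_tsum_sigma (norm_exp_two_pi_I_lt_one z) 3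
    rw [tsum_pnat_eq_tsum_succ (f := fun n : ℕ => (n : ℂ) ^ 3 * cexp (2 * Real.pi * I * z) ^ n /
      (1 - cexp (2 * Real.pi * I * z) ^ n))] at hs
    rw [hE, c2, bern4]
    simp only [zpow_natCast]
    rw [show 4 - 1 = 3 from rfl, ← hs]
    push_cast
    ring
  have hpi : (2 * (Real.pi : ℂ)) ≠ 0 := by
    simp [Real.pi_ne_zero]
  have := discriminant_ne_zero z
  rw [jfun, hd, hc, J]
  field_simp

lemma unpack (g : ℍ → ℂ) (hg : IsIntegral ZJ g) :
    ∃ n : ℕ, 1 ≤ n ∧ ∃ P : ℕ → Polynomial ℤ, ∀ z : ℍ,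
      g z ^ n + ∑ i ∈ Finset.range n, Polynomial.aeval (J z) (P i) * g z ^ i = 0 := by
  obtain ⟨p, hp, hpg⟩ := hg
  have hc : ∀ i, ∃ P : Polynomial ℤ, Polynomial.aeval J P = (p.coeff i : ℍ → ℂ) := fun i => by
    have := (Algebra.adjoin_singleton_eq_range_aeval ℤ J).le (p.coeff i).2
    exact this
  choose P hP using hc
  have key : ∀ z : ℍ, g z ^ p.natDegree + ∑ i ∈ Finset.range p.natDegree,
      Polynomial.aeval (J z) (P i) * g z ^ i = 0 := by
    intro z
    rw [Polynomial.eval₂_eq_sum_range, Finset.sum_range_succ, hp.coeff_natDegree, map_one,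
      one_mul] at hpg
    have h := congrFun hpg z
    simp only [Pi.add_apply, Finset.sum_apply, Pi.mul_apply, Pi.pow_apply, Pi.zero_apply] at h
    rw [add_comm, ← h]
    congr 1
    refine Finset.sum_congr rfl fun i _ => ?_
    congr 1
    change _ = (p.coeff i : ℍ → ℂ) z
    rw [← hP i]
    exact (Polynomial.aeval_algHom_apply (Pi.evalAlgHom ℤ (fun _ : ℍ => ℂ) z) J (P i))
  refine ⟨p.natDegree, ?_, P, key⟩
  rw [Nat.one_le_iff_ne_zero]
  intro h0
  have := key UpperHalfPlane.I
  rw [h0] at this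
  simp at this

end SG

/-- For `a = (a₁,a₂) ∈ ℚ² ∖ ℤ²` with `0 ≤ a₁ < 1`, the Siegel function `g_a` is integral
over `ℤ[j]`: there are `n ≥ 1` and `P₀,…,P_{n−1} ∈ ℤ[X]` with
`g_a(τ)ⁿ + ∑_{i<n} P_i(j(τ))·g_a(τ)^i = 0` for all `τ ∈ ℍ`. -/
theorem stmt_16 (a₁ a₂ : ℚ) (h0 : 0 ≤ a₁) (h1 : a₁ < 1)
    (hnZ : ¬∃ m n : ℤ, a₁ = (m : ℚ) ∧ a₂ = (n : ℚ)) :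
    ∃ n : ℕ, 1 ≤ n ∧ ∃ P : ℕ → Polynomial ℤ,
      ∀ τ : ℂ, 0 < τ.im →
        siegel (a₁ : ℝ) (a₂ : ℝ) τ ^ n +
          ∑ i ∈ Finset.range n,
            Polynomial.aeval (jfun τ) (P i) * siegel (a₁ : ℝ) (a₂ : ℝ) τ ^ i = 0 := by
  obtain ⟨n, hn, P, hP⟩ := SG.unpack _ (SG.siegel_integral a₁ a₂)
  refine ⟨n, hn, P, fun τ hτ => ?_⟩
  have h := hP ⟨τ, hτ⟩
  rw [← SG.jfun_eq] at h
  exact h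
end

section
/- Let a = (a₁, a₂) ∈ ℚ² with 0 ≤ a₁ < 1 and a ∉ ℤ², let N be the smallest positive integer with N·a₁ ∈ ℤ and N·a₂ ∈ ℤ (the exact order of a in (ℚ/ℤ)²), and set ζ_N = e^{2πi/N}. Then g_a(τ) ≠ 0 for all τ ∈ ℍ, and (1 − ζ_N)·g_a^{−1} is integral over ℤ[j]: there exist an integer n ≥ 1 and polynomials P₀, …, P_{n−1} ∈ ℤ[X] such that for every τ ∈ ℍ one has ((1 − ζ_N)/g_a(τ))ⁿ + ∑_{i=0}^{n−1} P_i(j(τ))·((1 − ζ_N)/g_a(τ))^i = 0. -/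
open Complex

namespace Sieg

open UpperHalfPlane hiding I
open Filter Topology Asymptotics

noncomputable def Mp (u v : ℂ) : ℂ := ∏' n : ℕ, (1 - u * v ^ (n + 1))

lemma summable_aux (u : ℂ) {v : ℂ} (hv : ‖v‖ < 1) : Summable fun n : ℕ => ‖-(u * v ^ (n + 1))‖ := by
  have := ((summable_nat_add_iff 1).mpr (summable_geometric_of_lt_one (norm_nonneg _) hv)).mul_left ‖u‖
  simpa using this

lemma multipliable_aux (u : ℂ) {v : ℂ} (hv : ‖v‖ < 1) :
    Multipliable fun n : ℕ => (1 - u * v ^ (n + 1)) := by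
  have := multipliable_one_add_of_summable (f := fun n : ℕ => -(u * v ^ (n + 1))) (summable_aux u hv)
  simpa [sub_eq_add_neg] using this

lemma Mp_ne_zero {u v : ℂ} (hv : ‖v‖ < 1) (h : ∀ n : ℕ, u * v ^ (n + 1) ≠ 1) : Mp u v ≠ 0 := by
  have := tprod_one_add_ne_zero_of_summable (f := fun n : ℕ => -(u * v ^ (n + 1)))
    (fun n => by
      have := h n
      rw [← sub_eq_add_neg, sub_ne_zero]; exact this.symm) (summable_aux u hv)
  simpa [Mp, sub_eq_add_neg] using this

lemma Mp_shift {u v : ℂ} (hv : ‖v‖ < 1) : Mp u v = (1 - u * v) * Mp (u * v) v := by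
  have h : Multipliable fun n : ℕ => (1 - u * v ^ (n + 1 + 1)) := by
    have := multipliable_aux (u * v) hv
    refine this.congr (fun n => by ring)
  have := tprod_eq_zero_mul' (f := fun n : ℕ => (1 - u * v ^ (n + 1))) h
  rw [Mp, this, Mp]
  congr 1
  · simp
  · refine tprod_congr fun n => by ring

lemma Mp_diff {U : Set ℂ} (hU : IsOpen U) {u v : ℂ → ℂ} (hu : DifferentiableOn ℂ u U)
    (hv : DifferentiableOn ℂ v U) (h : ∀ t ∈ U, ‖v t‖ < 1) :
    DifferentiableOn ℂ (fun t => Mp (u t) (v t)) U := by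
  have key : HasProdLocallyUniformlyOn (fun (n : ℕ) t => 1 - u t * v t ^ (n + 1))
      (fun t => Mp (u t) (v t)) U := by
    unfold Mp
    simp_rw [sub_eq_add_neg]
    apply hasProdLocallyUniformlyOn_of_forall_compact hU
    intro K hK hcK
    rcases K.eq_empty_or_nonempty with hN | hN
    · simpa [hasProdUniformlyOn_iff_tendstoUniformlyOn, hN] using tendstoUniformlyOn_empty
    · obtain ⟨q₀, hq₀, _, HB⟩ := hcK.exists_sSup_image_eq_and_ge hN
        (show ContinuousOn (fun q : ℂ ↦ ‖v q‖) K from (hv.continuousOn.mono hK).norm)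
      obtain ⟨q₁, hq₁, _, HB1⟩ := hcK.exists_sSup_image_eq_and_ge hN
        (show ContinuousOn (fun q : ℂ ↦ ‖u q‖) K from (hu.continuousOn.mono hK).norm)
      have hs := (((summable_nat_add_iff 1).mpr (summable_geometric_of_lt_one (norm_nonneg _)
        (h _ (hK hq₀)))).mul_left ‖u q₁‖)
      refine hs.hasProdUniformlyOn_nat_one_add
        hcK (.of_forall fun n x hx ↦ ?_) (fun n ↦ ?_)
      · simp only [norm_neg, norm_mul, norm_pow]
        gcongr
        · exact HB1 x hx
        · exact HB x hx
      · exact (((hu.continuousOn.mono hK).mul ((hv.continuousOn.mono hK).pow _))).neg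
  refine key.differentiableOn (.of_forall fun s ↦ ?_) hU
  have := DifferentiableOn.finsetProd (u := s) (s := U) (𝕜 := ℂ)
    (f := fun n t => 1 - u t * v t ^ (n + 1)) (fun n _ ↦ by fun_prop)
  simpa [Finset.prod_fn] using this

noncomputable def qq (τ : ℂ) : ℂ := Complex.exp (2 * Real.pi * I * τ)

lemma norm_qq {τ : ℂ} (h : 0 < τ.im) : ‖qq τ‖ < 1 := by
  rw [qq, Complex.norm_exp, Real.exp_lt_one_iff]
  have : (2 * Real.pi * I * τ).re = -(2 * Real.pi * τ.im) := by simp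
  rw [this]
  have := Real.pi_pos
  have := mul_pos this h
  linarith

noncomputable def Fr (z τ : ℂ) : ℂ :=
  Complex.exp (-(Real.pi * I * z)) * Mp (Complex.exp (2 * Real.pi * I * z)) (qq τ) *
    Mp (Complex.exp (-(2 * Real.pi * I * z))) (qq τ)

noncomputable def F (z τ : ℂ) : ℂ := (1 - Complex.exp (2 * Real.pi * I * z)) * Fr z τ

lemma Fr_diff {τ : ℂ} (h : 0 < τ.im) : Differentiable ℂ (fun z => Fr z τ) := by
  rw [← differentiableOn_univ]
  unfold Fr
  have h1 := Mp_diff (u := fun z => Complex.exp (2 * Real.pi * I * z)) (v := fun _ => qq τ)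
    isOpen_univ (by fun_prop) (by fun_prop) (fun _ _ => norm_qq h)
  have h2 := Mp_diff (u := fun z => Complex.exp (-(2 * Real.pi * I * z))) (v := fun _ => qq τ)
    isOpen_univ (by fun_prop) (by fun_prop) (fun _ _ => norm_qq h)
  exact ((DifferentiableOn.mul (by fun_prop) h1).mul h2)

lemma F_diff {τ : ℂ} (h : 0 < τ.im) : Differentiable ℂ (fun z => F z τ) := by
  have := Fr_diff h
  unfold F
  fun_prop

lemma F_comp_diff (z : ℂ → ℂ) (hz : Differentiable ℂ z) :
    DifferentiableOn ℂ (fun τ => F (z τ) τ) {τ | 0 < τ.im} := by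
  have hU : IsOpen {τ : ℂ | 0 < τ.im} := isOpen_lt continuous_const Complex.continuous_im
  have hq : DifferentiableOn ℂ qq {τ | 0 < τ.im} := by unfold qq; fun_prop
  have h1 := Mp_diff (u := fun t => Complex.exp (2 * Real.pi * I * z t)) (v := fun τ => qq τ)
    hU (by fun_prop) hq (fun _ h => norm_qq h)
  have h2 := Mp_diff (u := fun t => Complex.exp (-(2 * Real.pi * I * z t))) (v := fun τ => qq τ)
    hU (by fun_prop) hq (fun _ h => norm_qq h)
  unfold F Fr
  exact DifferentiableOn.mul (by fun_prop) ((DifferentiableOn.mul (by fun_prop) h1).mul h2)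

lemma F_add_one (z τ : ℂ) : F (z + 1) τ = - F z τ := by
  unfold F Fr
  have h1 : Complex.exp (2 * Real.pi * I * (z + 1)) = Complex.exp (2 * Real.pi * I * z) := by
    rw [mul_add, mul_one, Complex.exp_add, Complex.exp_two_pi_mul_I, mul_one]
  have h2 : Complex.exp (-(2 * Real.pi * I * (z + 1))) = Complex.exp (-(2 * Real.pi * I * z)) := by
    rw [Complex.exp_neg, h1, Complex.exp_neg]
  have h3 : Complex.exp (-(Real.pi * I * (z + 1))) = - Complex.exp (-(Real.pi * I * z)) := by
    rw [mul_add, mul_one, neg_add, Complex.exp_add, Complex.exp_neg (Real.pi * I), Complex.exp_pi_mul_I]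
    norm_num
  rw [h1, h2, h3]; ring

lemma F_add_tau (z : ℂ) {τ : ℂ} (h : 0 < τ.im) :
    F (z + τ) τ = - Complex.exp (-(Real.pi * I * τ) - 2 * Real.pi * I * z) * F z τ := by
  unfold F Fr
  have hq := norm_qq h
  have hq0 : qq τ ≠ 0 := Complex.exp_ne_zero _
  have h1 : Complex.exp (2 * Real.pi * I * (z + τ)) = Complex.exp (2 * Real.pi * I * z) * qq τ := by
    rw [mul_add, Complex.exp_add, qq]
  have h2 : Complex.exp (-(2 * Real.pi * I * (z + τ))) * qq τ = Complex.exp (-(2 * Real.pi * I * z)) := by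
    rw [qq, ← Complex.exp_add]; ring_nf
  have h3 : Complex.exp (-(Real.pi * I * (z + τ))) =
      Complex.exp (-(Real.pi * I * z)) * Complex.exp (-(Real.pi * I * τ)) := by
    rw [← Complex.exp_add]; ring_nf
  have h4 : Complex.exp (-(Real.pi * I * τ) - 2 * Real.pi * I * z) =
    Complex.exp (-(Real.pi * I * τ)) * Complex.exp (-(2 * Real.pi * I * z)) := by
    rw [← Complex.exp_add]; ring_nf
  have h5 : Complex.exp (-(2 * Real.pi * I * z)) * Complex.exp (2 * Real.pi * I * z) = 1 := by
    rw [← Complex.exp_add]; simp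
  rw [Mp_shift (u := Complex.exp (2 * Real.pi * I * z)) hq,
    Mp_shift (u := Complex.exp (-(2 * Real.pi * I * (z + τ)))) hq, h2, h1, h3, h4]
  set A := Complex.exp (2 * Real.pi * I * z)
  set B := Complex.exp (-(2 * Real.pi * I * z))
  linear_combination (-Complex.exp (-(Real.pi * I * z)) * Complex.exp (-(Real.pi * I * τ)) * (1 - A * qq τ) *
    Mp (A * qq τ) (qq τ) * Mp B (qq τ)) * h5

lemma F_sub_tau (z : ℂ) {τ : ℂ} (h : 0 < τ.im) :
    F (z - τ) τ = - Complex.exp (-(Real.pi * I * τ) + 2 * Real.pi * I * z) * F z τ := by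
  have := F_add_tau (z - τ) h
  rw [sub_add_cancel] at this
  rw [this, ← mul_assoc, neg_mul_neg, ← Complex.exp_add]
  ring_nf; simp

/-- lattice -/
def lat (τ z : ℂ) : Prop := ∃ m n : ℤ, z = m * τ + n

lemma exp_eq_one {z : ℂ} (h : Complex.exp (2 * Real.pi * I * z) = 1) : ∃ n : ℤ, z = n := by
  obtain ⟨n, hn⟩ := Complex.exp_eq_one_iff.1 h
  refine ⟨n, ?_⟩
  have : (2 * Real.pi * I) * z = (2 * Real.pi * I) * n := by rw [hn]; ring
  exact mul_left_cancel₀ Complex.two_pi_I_ne_zero this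

lemma Fr_ne_zero {z τ : ℂ} (h : 0 < τ.im)
    (h1 : ∀ m : ℕ, ∀ n : ℤ, z ≠ (m + 1) * τ + n) (h2 : ∀ m : ℕ, ∀ n : ℤ, z ≠ - (m + 1) * τ + n) :
    Fr z τ ≠ 0 := by
  refine mul_ne_zero (mul_ne_zero (Complex.exp_ne_zero _) (Mp_ne_zero (norm_qq h) fun n hn => ?_))
    (Mp_ne_zero (norm_qq h) fun n hn => ?_)
  · rw [qq, ← Complex.exp_nat_mul, ← Complex.exp_add] at hn
    obtain ⟨k, hk⟩ := exp_eq_one (z := z + (n + 1) * τ) (by refine Eq.trans ?_ hn; congr 1; push_cast; ring)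
    exact h2 n k (by rw [← hk]; ring)
  · rw [qq, ← Complex.exp_nat_mul, ← Complex.exp_add] at hn
    obtain ⟨k, hk⟩ := exp_eq_one (z := -z + (n + 1) * τ) (by refine Eq.trans ?_ hn; congr 1; push_cast; ring)
    exact h1 n (-k) (by push_cast; rw [← hk]; ring)

lemma F_ne_zero {z τ : ℂ} (h : 0 < τ.im) (hz : ¬ lat τ z) : F z τ ≠ 0 := by
  refine mul_ne_zero ?_ (Fr_ne_zero h ?_ ?_)
  · intro h0
    obtain ⟨n, hn⟩ := exp_eq_one (sub_eq_zero.1 h0).symm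
    exact hz ⟨0, n, by simp [hn]⟩
  · intro m n hh
    exact hz ⟨m + 1, n, by rw [hh]; push_cast; ring⟩
  · intro m n hh
    exact hz ⟨-(m + 1), n, by rw [hh]; push_cast; ring⟩

lemma F_zero (τ : ℂ) : F 0 τ = 0 := by simp [F]

lemma Fr_zero (τ : ℂ) : Fr 0 τ = Mp 1 (qq τ) ^ 2 := by simp [Fr]; ring

lemma Mp_one_ne {τ : ℂ} (h : 0 < τ.im) : Mp 1 (qq τ) ≠ 0 := by
  refine Mp_ne_zero (norm_qq h) fun n hn => ?_
  have : ‖qq τ ^ (n + 1)‖ < 1 := by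
    rw [norm_pow]; exact pow_lt_one₀ (norm_nonneg _) (norm_qq h) (by simp)
  rw [one_mul] at hn
  rw [hn] at this
  simp at this

lemma F_deriv {τ : ℂ} (h : 0 < τ.im) :
    HasDerivAt (fun z => F z τ) (-(2 * Real.pi * I) * Mp 1 (qq τ) ^ 2) 0 := by
  have h1 : HasDerivAt (fun z : ℂ => 1 - Complex.exp (2 * Real.pi * I * z)) (-(2 * Real.pi * I)) 0 := by
    have := (((hasDerivAt_id (0 : ℂ)).const_mul (2 * Real.pi * I)).cexp).const_sub 1
    simpa using this
  have h2 := (Fr_diff h 0).hasDerivAt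
  have h3 := h1.mul h2
  simp only [Fr_zero, mul_zero, Complex.exp_zero, sub_self, zero_mul, add_zero] at h3
  exact h3

end Sieg


namespace Sieg

open UpperHalfPlane hiding I
open Filter Topology Asymptotics

lemma elliptic_const {τ : ℂ} (h : 0 < τ.im) {A B : ℂ → ℂ} (hA : Differentiable ℂ A)
    (hB : Differentiable ℂ B) (hA0 : A 0 = 0) (hB0 : B 0 = 0) {a b : ℂ} (hAd : HasDerivAt A a 0)
    (hBd : HasDerivAt B b 0) (hb : b ≠ 0) (hBz : ∀ z, B z = 0 → lat τ z)
    (φ : ℂ → ℂ) (hφ : ∀ z, φ z ≠ 0) (hA1 : ∀ z, A (z + 1) = - A z) (hB1 : ∀ z, B (z + 1) = - B z)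
    (hAt : ∀ z, A (z + τ) = φ z * A z) (hBt : ∀ z, B (z + τ) = φ z * B z) (z : ℂ) :
    A z = (a / b) * B z := by
  classical
  set K : ℂ → ℂ := fun z => if B z = 0 then a / b else A z / B z with hK
  have p1 : Function.Periodic K 1 := by
    intro z
    simp only [hK, hA1, hB1, neg_eq_zero, neg_div_neg_eq]
  have p2 : Function.Periodic K τ := by
    intro z
    simp only [hK, hAt, hBt, mul_eq_zero, hφ, false_or]
    rw [mul_div_mul_left _ _ (hφ z)]
  have pl : ∀ (m n : ℤ) z, K (z + (m * τ + n)) = K z := by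
    intro m n z
    have e1 := (p2.int_mul m) z
    have e2 := (p1.int_mul n) (z + m * τ)
    rw [mul_one] at e2
    rw [← add_assoc, e2, e1]
  have K0 : K 0 = a / b := by simp [hK, hB0]
  have d1 : ∀ z, B z ≠ 0 → DifferentiableAt ℂ K z := by
    intro z hz
    have : (fun z => A z / B z) =ᶠ[𝓝 z] K := by
      filter_upwards [hB.continuous.continuousAt.eventually_ne hz] with y hy
      simp [hK, hy]
    exact ((hA z).div (hB z) hz).congr_of_eventuallyEq this.symm
  have hne : ∀ᶠ z in 𝓝[≠] (0 : ℂ), B z ≠ 0 := hBd.eventually_ne hb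
  have c0 : ContinuousAt K 0 := by
    rw [continuousAt_iff_punctured_nhds, K0]
    have t1 := hasDerivAt_iff_tendsto_slope.1 hAd
    have t2 := hasDerivAt_iff_tendsto_slope.1 hBd
    refine (t1.div t2 hb).congr' ?_
    filter_upwards [hne, self_mem_nhdsWithin] with z hz hz0
    have hz0 : z ≠ 0 := hz0
    simp only [hK, hz, slope_def_field, hA0, hB0, Pi.div_apply, if_false, sub_zero]
    field_simp
  have d0 : DifferentiableAt ℂ K 0 := by
    refine (Complex.analyticAt_of_differentiable_on_punctured_nhds_of_continuousAt ?_ c0).differentiableAt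
    filter_upwards [hne] with z hz using d1 z hz
  have dK : Differentiable ℂ K := by
    intro z
    by_cases hz : B z = 0
    · obtain ⟨m, n, rfl⟩ := hBz z hz
      have : K = fun w => K (w - (m * τ + n)) := by
        funext w
        have := pl m n (w - (m * τ + n))
        rw [sub_add_cancel] at this
        exact this
      rw [this]
      refine DifferentiableAt.comp (𝕜 := ℂ) (g := K) (f := fun w : ℂ => w - (m * τ + n)) (m * τ + n : ℂ) ?_ (by fun_prop)
      simpa using d0
    · exact d1 z hz
  have bd : Bornology.IsBounded (Set.range K) := by
    have hc : IsCompact ((fun p : ℝ × ℝ => K (p.1 * τ + p.2)) '' (Set.Icc 0 1 ×ˢ Set.Icc 0 1)) := by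
      refine (isCompact_Icc.prod isCompact_Icc).image ?_
      have := dK.continuous
      fun_prop
    refine hc.isBounded.subset ?_
    rintro _ ⟨z, rfl⟩
    set x : ℝ := z.im / τ.im
    set y : ℝ := z.re - x * τ.re
    refine ⟨(Int.fract x, Int.fract y), ⟨⟨Int.fract_nonneg _, (Int.fract_lt_one _).le⟩,
      ⟨Int.fract_nonneg _, (Int.fract_lt_one _).le⟩⟩, ?_⟩
    have hz : z = x * τ + y := by
      apply Complex.ext
      · simp [y]
      · simp [x]; field_simp
    have : z = (Int.fract x * τ + Int.fract y) + (⌊x⌋ * τ + ⌊y⌋) := by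
      rw [hz]
      have e1 : (x : ℂ) = ⌊x⌋ + Int.fract x := by exact_mod_cast (Int.floor_add_fract x).symm
      have e2 : (y : ℂ) = ⌊y⌋ + Int.fract y := by exact_mod_cast (Int.floor_add_fract y).symm
      linear_combination τ * e1 + e2
    rw [this, pl]
  have hc := dK.apply_eq_apply_of_bounded bd z 0
  rw [K0] at hc
  by_cases hz : B z = 0
  · rw [hz, mul_zero]
    obtain ⟨m, n, rfl⟩ := hBz z hz
    have pa : Function.Periodic (fun z => A z = 0) 1 := by intro z; simp [hA1]
    have pb : Function.Periodic (fun z => A z = 0) τ := by intro z; simp [hAt, hφ]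
    have e1 := (pb.int_mul m) 0
    have e2 := (pa.int_mul n) (0 + m * τ)
    simp only [mul_one, zero_add, hA0] at e1 e2
    rw [e2, e1]; trivial
  · simp only [hK, hz, if_false] at hc
    rw [← hc]; field_simp

lemma eta24 (τ : ℂ) : ModularForm.eta τ ^ 24 = qq τ * Mp 1 (qq τ) ^ 24 := by
  have h1 : (∏' n, (1 - ModularForm.eta_q n τ)) = Mp 1 (qq τ) := by
    unfold Mp
    refine tprod_congr fun n => ?_
    rw [ModularForm.eta_q_eq_pow, one_mul, qq]
  have h2 : Function.Periodic.qParam 24 τ ^ 24 = qq τ := by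
    simp only [Function.Periodic.qParam, qq, ← Complex.exp_nat_mul]
    congr 1
    push_cast
    ring
  rw [ModularForm.eta, h1, mul_pow, h2]

lemma im_S {τ : ℂ} (h : 0 < τ.im) : 0 < (-1 / τ).im := by
  have h0 : τ ≠ 0 := by rintro rfl; simp at h
  rw [neg_div, one_div, Complex.neg_im, Complex.inv_im]
  have : 0 < Complex.normSq τ := Complex.normSq_pos.2 h0
  rw [neg_div, neg_neg]; positivity

lemma E24 {τ : ℂ} (h : 0 < τ.im) :
    qq (-1 / τ) * Mp 1 (qq (-1 / τ)) ^ 24 = τ ^ 12 * (qq τ * Mp 1 (qq τ) ^ 24) := by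
  rw [← eta24, ← eta24]
  have h0 : τ ≠ 0 := by rintro rfl; simp at h
  have := congrFun ModularForm.discriminant_S_invariant ⟨τ, h⟩
  rw [ModularForm.SL_slash_apply, UpperHalfPlane.modular_S_smul] at this
  have hd := ModularGroup.denom_S ⟨τ, h⟩
  simp only [ModularForm.discriminant] at this
  simp at this hd
  rw [hd] at this
  rw [show -1 / τ = -τ⁻¹ by ring]
  rw [← this]
  field_simp

/-- S-transformation, twelfth power -/
lemma F_S {τ : ℂ} (h : 0 < τ.im) (z : ℂ) :
    qq (-1 / τ) * F (z / τ) (-1 / τ) ^ 12 =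
      qq τ * Complex.exp (12 * Real.pi * I * (z ^ 2 / τ)) * F z τ ^ 12 := by
  have h0 : τ ≠ 0 := by rintro rfl; simp at h
  have h' := im_S h
  set A : ℂ → ℂ := fun z => F (z / τ) (-1 / τ) * Complex.exp (-(Real.pi * I * (z ^ 2 / τ))) with hA
  have dA : Differentiable ℂ A := by
    have := F_diff h'
    have h2 : Differentiable ℂ (fun z => F (z / τ) (-1 / τ)) :=
      this.comp (f := fun z => z / τ) (by fun_prop)
    rw [hA]; fun_prop
  have hAd : HasDerivAt A (-(2 * Real.pi * I) * Mp 1 (qq (-1 / τ)) ^ 2 / τ) 0 := by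
    have h1 : HasDerivAt (fun z => F (z / τ) (-1 / τ)) (-(2 * Real.pi * I) * Mp 1 (qq (-1 / τ)) ^ 2 * (1 / τ)) 0 := by
      refine HasDerivAt.comp (h := fun z => z / τ) (h₂ := fun y => F y (-1 / τ)) (0 : ℂ) ?_ ((hasDerivAt_id _).div_const τ)
      rw [zero_div]; exact F_deriv h'
    have h2 : DifferentiableAt ℂ (fun z : ℂ => Complex.exp (-(Real.pi * I * (z ^ 2 / τ)))) 0 := by
      fun_prop
    have h3 := h1.mul h2.hasDerivAt
    simp only [zero_div, F_zero, zero_mul, add_zero] at h3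
    refine h3.congr_deriv ?_
    simp [div_eq_mul_inv]
  have key := elliptic_const h dA (F_diff h) (by simp [hA, F_zero]) (F_zero τ) hAd (F_deriv h)
    (mul_ne_zero (neg_ne_zero.2 Complex.two_pi_I_ne_zero) (pow_ne_zero 2 (Mp_one_ne h)))
    (fun z hz => by by_contra hl; exact F_ne_zero h hl hz)
    (fun z => - Complex.exp (-(Real.pi * I * τ) - 2 * Real.pi * I * z))
    (fun z => neg_ne_zero.2 (Complex.exp_ne_zero _))
    (fun z => by
      simp only [hA]
      rw [show (z + 1) / τ = z / τ - (-1 / τ) by ring, F_sub_tau _ h', neg_mul, neg_mul]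
      congr 1
      rw [mul_right_comm, ← Complex.exp_add, mul_comm]
      congr 2
      field_simp
      ring)
    (fun z => F_add_one z τ)
    (fun z => by
      simp only [hA]
      rw [show (z + τ) / τ = z / τ + 1 by field_simp, F_add_one, neg_mul, neg_mul]
      congr 1
      rw [mul_left_comm, ← Complex.exp_add]
      congr 2
      field_simp
      ring)
    (fun z => F_add_tau z h) z
  have hz : F (z / τ) (-1 / τ) = Complex.exp (Real.pi * I * (z ^ 2 / τ)) * A z := by
    simp only [hA]
    rw [mul_left_comm, ← Complex.exp_add]; simp
  have hp : (Real.pi : ℂ) ≠ 0 := by exact_mod_cast Real.pi_ne_zero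
  have hM := Mp_one_ne h
  have E := E24 h
  rw [hz, key, mul_pow, mul_pow, div_pow, ← Complex.exp_nat_mul]
  rw [show ((12 : ℕ) : ℂ) * (Real.pi * I * (z ^ 2 / τ)) = 12 * Real.pi * I * (z ^ 2 / τ) by push_cast; ring]
  rw [show qq (-1 / τ) * (cexp (12 * Real.pi * I * (z ^ 2 / τ)) *
      ((-(2 * Real.pi * I) * Mp 1 (qq (-1 / τ)) ^ 2 / τ) ^ 12 /
      (-(2 * Real.pi * I) * Mp 1 (qq τ) ^ 2) ^ 12 * F z τ ^ 12)) =
      ((qq (-1 / τ) * Mp 1 (qq (-1 / τ)) ^ 24) / (τ ^ 12 * Mp 1 (qq τ) ^ 24)) *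
      cexp (12 * Real.pi * I * (z ^ 2 / τ)) * F z τ ^ 12 by field_simp]
  rw [E]
  field_simp

end Sieg


namespace Sieg

open UpperHalfPlane hiding I
open Filter Topology Asymptotics

noncomputable def G (a b : ℝ) (τ : ℂ) : ℂ :=
  qq τ * Complex.exp (12 * Real.pi * I * (a * (a * τ + b))) * F (a * τ + b) τ ^ 12

lemma qq_add_one (τ : ℂ) : qq (τ + 1) = qq τ := by
  rw [qq, mul_add, mul_one, Complex.exp_add, Complex.exp_two_pi_mul_I, mul_one, qq]

lemma G_T (a b : ℝ) (τ : ℂ) : G a b (τ + 1) = G a (a + b) τ := by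
  unfold G F Fr
  rw [qq_add_one]
  rw [show (a : ℂ) * (τ + 1) + b = a * τ + (a + b : ℝ) by push_cast; ring]

lemma G_S (a b : ℝ) {τ : ℂ} (h : 0 < τ.im) : G a b (-1 / τ) = G b (-a) τ := by
  have h0 : τ ≠ 0 := by rintro rfl; simp at h
  unfold G
  have := F_S h (b * τ + (-a : ℝ))
  rw [show (a : ℂ) * (-1 / τ) + b = (b * τ + (-a : ℝ)) / τ by push_cast; field_simp; ring]
  rw [mul_right_comm, this, mul_right_comm, mul_assoc (qq τ), ← Complex.exp_add]
  congr 3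
  push_cast
  field_simp
  ring

lemma G_add2 (a b : ℝ) (τ : ℂ) : G a (b + 1) τ = Complex.exp (12 * Real.pi * I * a) * G a b τ := by
  unfold G
  rw [show (a : ℂ) * τ + (b + 1 : ℝ) = (a * τ + b) + 1 by push_cast; ring, F_add_one]
  rw [show (12 * Real.pi * I * (a * (a * τ + b + 1)) : ℂ) = 12 * Real.pi * I * a +
    12 * Real.pi * I * (a * (a * τ + b)) by ring, Complex.exp_add]
  ring

lemma G_add1 (a b : ℝ) {τ : ℂ} (h : 0 < τ.im) :
    G (a + 1) b τ = Complex.exp (-(12 * Real.pi * I * b)) * G a b τ := by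
  unfold G
  rw [show ((a + 1 : ℝ) : ℂ) * τ + b = (a * τ + b) + τ by push_cast; ring, F_add_tau _ h]
  rw [mul_pow, neg_pow, ← Complex.exp_nat_mul]
  rw [show ∀ q x y f e : ℂ, q * x * ((-1) ^ 12 * y * f) = q * (x * y) * f by intros; ring,
    show ∀ q x f e : ℂ, e * (q * x * f) = q * (e * x) * f by intros; ring]
  · rw [← Complex.exp_add, ← Complex.exp_add]
    congr 3
    push_cast
    ring
  · exact 0

lemma prod_aux (w w' : ℂ) {q : ℂ} (hq : ‖q‖ < 1) :
    ∏' n : ℕ, (1 - w * q ^ n) * (1 - w' * q ^ (n + 1)) = (1 - w) * Mp w q * Mp w' q := by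
  have m1 := multipliable_aux w hq
  have m2 := multipliable_aux w' hq
  have m0 : Multipliable fun n : ℕ => 1 - w * q ^ n := by
    have h0 : Summable fun n : ℕ => ‖-(w * q ^ n)‖ := by
      simpa using (summable_geometric_of_lt_one (norm_nonneg _) hq).mul_left ‖w‖
    have := multipliable_one_add_of_summable h0
    simpa [sub_eq_add_neg] using this
  have t1 := m0.tprod_mul m2
  have t2 := tprod_eq_zero_mul' (f := fun n : ℕ => 1 - w * q ^ n) m1
  rw [t1, t2, Mp, Mp]
  simp

lemma siegel_eq (a b : ℝ) {τ : ℂ} (h : 0 < τ.im) :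
    siegel a b τ = -qpow τ (B2 a / 2) * Complex.exp (Real.pi * I * (b : ℂ) * ((a : ℂ) - 1)) *
      (Complex.exp (Real.pi * I * (a * τ + b)) * F (a * τ + b) τ) := by
  have hq := norm_qq h
  have e1 : ∀ n : ℕ, qpow τ ((n : ℝ) + a) * Complex.exp (2 * Real.pi * I * (b : ℂ)) =
      Complex.exp (2 * Real.pi * I * (a * τ + b)) * qq τ ^ n := by
    intro n
    rw [qpow, qq, ← Complex.exp_nat_mul, ← Complex.exp_add, ← Complex.exp_add]
    congr 1; push_cast; ring
  have e2 : ∀ n : ℕ, qpow τ ((n : ℝ) + 1 - a) * Complex.exp (-(2 * Real.pi * I * (b : ℂ))) =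
      Complex.exp (-(2 * Real.pi * I * (a * τ + b))) * qq τ ^ (n + 1) := by
    intro n
    rw [qpow, qq, ← Complex.exp_nat_mul, ← Complex.exp_add, ← Complex.exp_add]
    congr 1; push_cast; ring
  have e3 : Complex.exp (Real.pi * I * (a * τ + b)) * Complex.exp (-(Real.pi * I * (a * τ + b))) = 1 := by
    rw [← Complex.exp_add, add_neg_cancel, Complex.exp_zero]
  have e4 : ∀ x y c m1 m2 : ℂ, x * y = 1 → c * m1 * m2 = x * (c * (y * m1 * m2)) := by
    intro x y c m1 m2 hxy
    linear_combination (-(c * m1 * m2)) * hxy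
  have e5 := e4 _ _ (1 - Complex.exp (2 * Real.pi * I * (a * τ + b)))
    (Mp (Complex.exp (2 * Real.pi * I * (a * τ + b))) (qq τ))
    (Mp (Complex.exp (-(2 * Real.pi * I * (a * τ + b)))) (qq τ)) e3
  rw [siegel, F, Fr, ← e5, ← prod_aux _ _ hq]
  simp only [e1, e2]

lemma siegel_pow (a b : ℝ) {τ : ℂ} (h : 0 < τ.im) : siegel a b τ ^ 12 = G a b τ := by
  rw [siegel_eq a b h, G, qpow]
  have e : ∀ x y z f : ℂ, (-x * y * (z * f)) ^ 12 = x ^ 12 * y ^ 12 * z ^ 12 * f ^ 12 := by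
    intros; ring
  rw [e]
  congr 1
  simp only [← Complex.exp_nat_mul, qq, ← Complex.exp_add]
  congr 1
  unfold B2
  push_cast
  ring

lemma siegel_ne_zero (a b : ℝ) {τ : ℂ} (h : 0 < τ.im) (hab : ¬ ∃ m n : ℤ, a = m ∧ b = n) :
    siegel a b τ ≠ 0 := by
  rw [siegel_eq a b h]
  refine mul_ne_zero (mul_ne_zero (neg_ne_zero.2 (Complex.exp_ne_zero _)) (Complex.exp_ne_zero _))
    (mul_ne_zero (Complex.exp_ne_zero _) (F_ne_zero h ?_))
  rintro ⟨m, n, hmn⟩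
  have him := congrArg Complex.im hmn
  simp at him
  have ham : a = m := by
    rcases him with h1 | h1
    · exact h1
    · exact absurd h1 h.ne'
  rw [ham] at hmn
  simp at hmn
  exact hab ⟨m, n, ham, by exact_mod_cast hmn⟩

end Sieg


namespace Sieg

open UpperHalfPlane hiding I
open Filter Topology Asymptotics

/-- algebraic integers -/
abbrev RR : Subalgebra ℤ ℂ := integralClosure ℤ ℂ

section Ex
variable {α : Type*} (l : Filter α) (x : α → ℂ)

def Ex (f : α → ℂ) : Prop :=
  ∀ K : ℕ, ∃ Q : Polynomial RR, (fun t => f t - Polynomial.aeval (x t) Q) =O[l] fun t => x t ^ K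

variable {l x}

lemma Ex.poly (Q : Polynomial RR) : Ex l x (fun t => Polynomial.aeval (x t) Q) :=
  fun K => ⟨Q, by simpa using isBigO_zero _ _⟩

lemma Ex.const {c : ℂ} (hc : c ∈ RR) : Ex l x (fun _ => c) := by
  have := Ex.poly (l := l) (x := x) (Polynomial.C ⟨c, hc⟩)
  simpa using this

lemma Ex.var : Ex l x x := by
  simpa using Ex.poly (l := l) (x := x) Polynomial.X

lemma Ex.add {f g : α → ℂ} (hf : Ex l x f) (hg : Ex l x g) : Ex l x (fun t => f t + g t) := by
  intro K
  obtain ⟨P, hP⟩ := hf K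
  obtain ⟨Q, hQ⟩ := hg K
  refine ⟨P + Q, (hP.add hQ).congr_left fun t => ?_⟩
  simp; ring

lemma poly_bdd (hx : Tendsto x l (𝓝 0)) (Q : Polynomial RR) :
    Tendsto (fun t => Polynomial.aeval (x t) Q) l (𝓝 (Q.coeff 0 : ℂ)) := by
  have : Continuous fun z : ℂ => Polynomial.aeval z Q := Polynomial.continuous_aeval Q
  have h := (this.tendsto 0).comp hx
  simp only [Polynomial.aeval_def, Polynomial.eval₂_at_zero] at h
  exact h

lemma Ex.bdd (hx : Tendsto x l (𝓝 0)) {f : α → ℂ} (hf : Ex l x f) :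
    f =O[l] (fun _ => (1 : ℂ)) := by
  obtain ⟨Q, hQ⟩ := hf 0
  simp only [pow_zero] at hQ
  have := hQ.add ((poly_bdd hx Q).isBigO_one ℂ)
  exact this.congr_left fun t => by ring

lemma Ex.mul (hx : Tendsto x l (𝓝 0)) {f g : α → ℂ} (hf : Ex l x f) (hg : Ex l x g) :
    Ex l x (fun t => f t * g t) := by
  intro K
  obtain ⟨P, hP⟩ := hf K
  obtain ⟨Q, hQ⟩ := hg K
  refine ⟨P * Q, ?_⟩
  have h1 := hP.mul (hg.bdd hx)
  have h2 := ((poly_bdd hx P).isBigO_one ℂ).mul hQ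
  simp only [mul_one, one_mul] at h1 h2
  refine (h1.add h2).congr_left fun t => ?_
  simp; ring

lemma Ex.pow (hx : Tendsto x l (𝓝 0)) {f : α → ℂ} (hf : Ex l x f) (n : ℕ) :
    Ex l x (fun t => f t ^ n) := by
  induction n with
  | zero => simpa using Ex.const (one_mem RR)
  | succ n ih => simpa [pow_succ] using ih.mul hx hf

lemma Ex.neg {f : α → ℂ} (hf : Ex l x f) : Ex l x (fun t => - f t) := by
  intro K
  obtain ⟨P, hP⟩ := hf K
  refine ⟨-P, hP.neg_left.congr_left fun t => ?_⟩
  simp; ring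

lemma Ex.sub {f g : α → ℂ} (hf : Ex l x f) (hg : Ex l x g) : Ex l x (fun t => f t - g t) := by
  simpa [sub_eq_add_neg] using hf.add hg.neg

lemma Ex.approx {f : α → ℂ} (h : ∀ K : ℕ, ∃ g, Ex l x g ∧ (fun t => f t - g t) =O[l] fun t => x t ^ K) :
    Ex l x f := by
  intro K
  obtain ⟨g, hg, hfg⟩ := h K
  obtain ⟨Q, hQ⟩ := hg K
  exact ⟨Q, (hfg.add hQ).congr_left fun t => by ring⟩

lemma Ex.congr {f g : α → ℂ} (hf : Ex l x f) (h : f =ᶠ[l] g) : Ex l x g := by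
  intro K
  obtain ⟨Q, hQ⟩ := hf K
  refine ⟨Q, hQ.congr' ?_ EventuallyEq.rfl⟩
  filter_upwards [h] with t ht
  rw [ht]

lemma Ex.sum (ι : Type*) (s : Finset ι) {f : ι → α → ℂ} (hf : ∀ i ∈ s, Ex l x (f i)) :
    Ex l x (fun t => ∑ i ∈ s, f i t) := by
  classical
  induction s using Finset.induction_on with
  | empty => simpa using Ex.const (zero_mem RR)
  | insert a s ha ih =>
    simp only [Finset.sum_insert ha]
    exact (hf a (Finset.mem_insert_self _ _)).add (ih fun i hi => hf i (Finset.mem_insert_of_mem hi))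

lemma Ex.prod (hx : Tendsto x l (𝓝 0)) (ι : Type*) (s : Finset ι) {f : ι → α → ℂ}
    (hf : ∀ i ∈ s, Ex l x (f i)) :
    Ex l x (fun t => ∏ i ∈ s, f i t) := by
  classical
  induction s using Finset.induction_on with
  | empty => simpa using Ex.const (one_mem RR)
  | insert a s ha ih =>
    simp only [Finset.prod_insert ha]
    exact (hf a (Finset.mem_insert_self _ _)).mul hx (ih fun i hi => hf i (Finset.mem_insert_of_mem hi))

lemma Ex.lim (hx : Tendsto x l (𝓝 0)) {f : α → ℂ} (hf : Ex l x f) :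
    ∃ c ∈ RR, Tendsto f l (𝓝 c) := by
  obtain ⟨Q, hQ⟩ := hf 1
  refine ⟨Q.coeff 0, (Q.coeff 0).2, ?_⟩
  simp only [pow_one] at hQ
  have := (hQ.trans_tendsto hx).add (poly_bdd hx Q)
  simpa using this

lemma Ex.div_var [l.NeBot] (hx : Tendsto x l (𝓝 0)) (hx0 : ∀ t, x t ≠ 0) {f : α → ℂ} (hf : Ex l x f)
    (h0 : Tendsto f l (𝓝 0)) : Ex l x (fun t => f t / x t) := by
  intro K
  obtain ⟨Q, hQ⟩ := hf (K + 1)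
  have hc : Q.coeff 0 = 0 := by
    have hQ1 : Tendsto (fun t => x t ^ (K + 1)) l (𝓝 0) := by simpa using hx.pow (K + 1)
    have := (hQ.trans_tendsto hQ1).add (poly_bdd hx Q)
    simp only [sub_add_cancel, zero_add] at this
    have := tendsto_nhds_unique this h0
    exact_mod_cast this
  refine ⟨Q.divX, ?_⟩
  have hb : (fun t => (x t)⁻¹) =O[l] (fun t => (x t)⁻¹) := isBigO_refl _ _
  have := hQ.mul hb
  refine this.congr (fun t => ?_) (fun t => ?_)
  · have e : Polynomial.aeval (x t) Q = Polynomial.aeval (x t) Q.divX * x t := by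
      conv_lhs => rw [← Polynomial.divX_mul_X_add Q, hc]
      simp
    rw [e]
    field_simp [hx0 t]
  · rw [pow_succ]; field_simp [hx0 t]

lemma Ex.bigO_var [l.NeBot] (hx : Tendsto x l (𝓝 0)) (hx0 : ∀ t, x t ≠ 0) {f : α → ℂ} (hf : Ex l x f)
    (h0 : Tendsto f l (𝓝 0)) : f =O[l] x := by
  have := ((hf.div_var hx hx0 h0).bdd hx).mul (isBigO_refl x l)
  refine this.congr (fun t => ?_) (fun t => by simp)
  field_simp [hx0 t]

lemma Ex.inv [l.NeBot] (hx : Tendsto x l (𝓝 0)) (hx0 : ∀ t, x t ≠ 0) {f : α → ℂ} (hf : Ex l x f)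
    (h1 : Tendsto f l (𝓝 1)) : Ex l x (fun t => (f t)⁻¹) := by
  have hh : Ex l x (fun t => 1 - f t) := (Ex.const (one_mem RR)).sub hf
  have hh0 : Tendsto (fun t => 1 - f t) l (𝓝 0) := by simpa using h1.const_sub 1
  have hO := hh.bigO_var hx hx0 hh0
  have hne : ∀ᶠ t in l, f t ≠ 0 := h1.eventually_ne one_ne_zero
  have hi : Tendsto (fun t => (f t)⁻¹) l (𝓝 1) := by simpa using h1.inv₀ one_ne_zero
  refine Ex.approx fun K => ⟨fun t => ∑ k ∈ Finset.range K, (1 - f t) ^ k,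
    Ex.sum _ _ fun i _ => hh.pow hx i, ?_⟩
  have := (hO.pow K).mul (hi.isBigO_one ℂ)
  refine this.congr' ?_ (by simp)
  filter_upwards [hne] with t ht
  have := mul_neg_geom_sum (1 - f t) K
  rw [sub_sub_cancel] at this
  field_simp
  linear_combination this

lemma Mp_bound {u v : ℂ} (hv : ‖v‖ ≤ 1 / 2) (huv : ‖u * v‖ ≤ 1 / 2) : ‖Mp u v - 1‖ ≤ 4 * ‖u * v‖ := by
  have hv1 : ‖v‖ < 1 := by linarith
  have hp := (multipliable_aux u hv1).hasProd
  have hs := summable_aux u hv1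
  have hsum : ∑' n : ℕ, ‖-(u * v ^ (n + 1))‖ ≤ 2 * ‖u * v‖ := by
    have e : ∀ n : ℕ, ‖-(u * v ^ (n + 1))‖ = ‖u * v‖ * ‖v‖ ^ n := by
      intro n; rw [norm_neg, norm_mul, norm_pow, norm_mul]; ring
    simp only [e]
    rw [tsum_mul_left, tsum_geometric_of_lt_one (norm_nonneg _) hv1, mul_comm]
    gcongr
    rw [inv_le_comm₀ (by linarith) (by norm_num)]
    linarith
  refine le_of_tendsto ((hp.sub_const 1).norm) (Eventually.of_forall fun s => ?_)
  have := Finset.norm_prod_one_add_sub_one_le s (fun n : ℕ => -(u * v ^ (n + 1)))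
  simp only [← sub_eq_add_neg] at this
  refine this.trans ?_
  have h2 : ∑ i ∈ s, ‖-(u * v ^ (i + 1))‖ ≤ 2 * ‖u * v‖ := (hs.sum_le_tsum s fun _ _ => norm_nonneg _).trans hsum
  have h3 : Real.exp (∑ i ∈ s, ‖-(u * v ^ (i + 1))‖) ≤ Real.exp (2 * ‖u * v‖) := Real.exp_le_exp.2 h2
  have h4 := Real.abs_exp_sub_one_le (x := 2 * ‖u * v‖) (by rw [abs_of_nonneg (by positivity)]; linarith)
  rw [abs_of_nonneg (a := 2 * ‖u * v‖) (by positivity)] at h4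
  have := le_abs_self (Real.exp (2 * ‖u * v‖) - 1)
  linarith

lemma Mp_bigO {u v : α → ℂ} (hv : Tendsto v l (𝓝 0)) (huv : Tendsto (fun t => u t * v t) l (𝓝 0)) :
    (fun t => Mp (u t) (v t) - 1) =O[l] (fun t => u t * v t) := by
  refine IsBigO.of_bound 4 ?_
  have h1 := hv.norm.eventually (Iic_mem_nhds (show ‖(0 : ℂ)‖ < 1 / 2 by norm_num))
  have h2 := huv.norm.eventually (Iic_mem_nhds (show ‖(0 : ℂ)‖ < 1 / 2 by norm_num))
  filter_upwards [h1, h2] with t ha hb using Mp_bound ha hb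

lemma Mp_iter {u v : ℂ} (hv : ‖v‖ < 1) (k : ℕ) :
    Mp u v = (∏ j ∈ Finset.range k, (1 - u * v ^ (j + 1))) * Mp (u * v ^ k) v := by
  induction k with
  | zero => simp
  | succ k ih =>
    rw [ih, Mp_shift (u := u * v ^ k) hv, Finset.prod_range_succ, pow_succ]
    ring_nf

lemma Mp_Ex (hx : Tendsto x l (𝓝 0)) {u v : α → ℂ} {c : ℂ} (hc : c ∈ RR) {N m : ℕ} (hN : 0 < N)
    (hm : 0 < m) (hv : ∀ t, v t = x t ^ N) (huv : ∀ t, u t * v t = c * x t ^ m) :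
    Ex l x (fun t => Mp (u t) (v t)) ∧ Tendsto (fun t => Mp (u t) (v t)) l (𝓝 1) := by
  have hvt : Tendsto v l (𝓝 0) := by
    have := hx.pow N
    rw [zero_pow hN.ne'] at this
    exact this.congr fun t => (hv t).symm
  have hk : ∀ (k : ℕ) t, u t * v t ^ (k + 1) = c * x t ^ (m + N * k) := by
    intro k t
    rw [pow_succ', ← mul_assoc, huv, hv, ← pow_mul, pow_add]; ring
  have ht : ∀ k : ℕ, Tendsto (fun t => u t * v t ^ k * v t) l (𝓝 0) := by
    intro k
    have := (hx.pow (m + N * k)).const_mul c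
    rw [zero_pow (by omega), mul_zero] at this
    refine this.congr fun t => ?_
    rw [← hk, pow_succ]; ring
  have hO : ∀ k : ℕ, (fun t => Mp (u t * v t ^ k) (v t) - 1) =O[l] fun t => x t ^ k := by
    intro k
    refine (Mp_bigO hvt (ht k)).trans ?_
    have e : (fun t => u t * v t ^ k * v t) = fun t => (c * x t ^ (m + N * k - k)) * x t ^ k := by
      funext t
      rw [mul_assoc, mul_assoc, ← pow_succ, hk, ← pow_add]
      congr 2
      have : k ≤ N * k := Nat.le_mul_of_pos_left k hN
      omega
    rw [e]
    have h1 : (fun t => c * x t ^ (m + N * k - k)) =O[l] (fun _ => (1 : ℂ)) :=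
      ((hx.pow _).const_mul c).isBigO_one ℂ
    simpa using h1.mul (isBigO_refl (fun t => x t ^ k) l)
  have hv1 : ∀ᶠ t in l, ‖v t‖ < 1 := by
    have := hvt.norm.eventually (Iio_mem_nhds (show ‖(0 : ℂ)‖ < 1 by norm_num))
    exact this
  constructor
  · refine Ex.approx fun K => ⟨fun t => ∏ j ∈ Finset.range K, (1 - u t * v t ^ (j + 1)), ?_, ?_⟩
    · refine Ex.prod hx _ _ fun j _ => ?_
      simp only [hk]
      exact (Ex.const (one_mem RR)).sub ((Ex.const hc).mul hx (Ex.var.pow hx _))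
    · have hb : (fun t => ∏ j ∈ Finset.range K, (1 - u t * v t ^ (j + 1))) =O[l] (fun _ => (1 : ℂ)) := by
        refine Ex.bdd hx (Ex.prod hx _ _ fun j _ => ?_)
        simp only [hk]
        exact (Ex.const (one_mem RR)).sub ((Ex.const hc).mul hx (Ex.var.pow hx _))
      have := hb.mul (hO K)
      simp only [one_mul] at this
      refine this.congr' ?_ EventuallyEq.rfl
      filter_upwards [hv1] with t ht
      rw [Mp_iter (u := u t) ht K, mul_sub, mul_one]
  · have := Mp_bigO hvt (by simpa using ht 0)
    have h2 := this.trans_tendsto (by simpa using ht 0)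
    simpa using h2.add_const 1

end Ex

end Sieg


namespace Sieg

open UpperHalfPlane hiding I
open Filter Topology Asymptotics
open scoped MatrixGroups Manifold ModularForm

section
variable {α : Type*} {l : Filter α} {x : α → ℂ}

lemma Ex_series (hx : Tendsto x l (𝓝 0)) {c : ℕ → ℂ} (hc : ∀ n, c n ∈ RR)
    (hs : Summable fun n => ‖c n‖ * (1 / 2) ^ n) {N : ℕ} (hN : 0 < N) :
    Ex l x (fun t => ∑' n, c n * (x t ^ N) ^ n) := by
  have hv : Tendsto (fun t => x t ^ N) l (𝓝 0) := by
    have := hx.pow N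
    rwa [zero_pow hN.ne'] at this
  have h1 := hv.norm.eventually (Iic_mem_nhds (show ‖(0 : ℂ)‖ < 1 / 2 by norm_num))
  refine Ex.approx fun K => ⟨fun t => ∑ n ∈ Finset.range K, c n * (x t ^ N) ^ n, ?_, ?_⟩
  · exact Ex.sum _ _ fun n _ => (Ex.const (hc n)).mul hx ((Ex.var.pow hx N).pow hx n)
  · have h2 := hx.norm.eventually (Iic_mem_nhds (show ‖(0 : ℂ)‖ < 1 by norm_num))
    refine IsBigO.of_bound (∑' n, ‖c (n + K)‖ * (1 / 2) ^ n) ?_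
    have hsK : Summable fun n => ‖c (n + K)‖ * (1 / 2 : ℝ) ^ n := by
      have := ((summable_nat_add_iff K).2 hs).mul_right ((1 / 2 : ℝ) ^ K)⁻¹
      refine this.congr fun n => ?_
      rw [pow_add]; field_simp
    filter_upwards [h1, h2] with t ht ht2
    have ht : ‖x t ^ N‖ ≤ 1 / 2 := ht
    have ht2 : ‖x t‖ ≤ 1 := ht2
    have hsum : Summable fun n => c n * (x t ^ N) ^ n := by
      refine Summable.of_norm_bounded hs fun n => ?_
      rw [norm_mul, norm_pow]
      gcongr
    rw [← hsum.sum_add_tsum_nat_add K, add_sub_cancel_left]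
    have e : ∀ n, c (n + K) * (x t ^ N) ^ (n + K) = (c (n + K) * (x t ^ N) ^ n) * (x t ^ N) ^ K := by
      intro n; rw [pow_add]; ring
    simp only [e]
    rw [tsum_mul_right, norm_mul]
    gcongr
    · refine tsum_of_norm_bounded hsK.hasSum fun n => ?_
      rw [norm_mul, norm_pow]
      gcongr
    · rw [norm_pow, norm_pow, ← pow_mul, norm_pow]
      refine pow_le_pow_of_le_one (norm_nonneg _) ht2 (Nat.le_mul_of_pos_left K hN)
end

noncomputable def xN (N : ℕ) (τ : ℍ) : ℂ := Complex.exp (2 * Real.pi * I * (τ : ℂ) / N)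

lemma xN_ne (N : ℕ) (τ : ℍ) : xN N τ ≠ 0 := Complex.exp_ne_zero _

lemma xN_pow {N : ℕ} (hN : 0 < N) (τ : ℍ) : xN N τ ^ N = qq τ := by
  rw [xN, qq, ← Complex.exp_nat_mul]
  have : (N : ℂ) ≠ 0 := by exact_mod_cast hN.ne'
  congr 1; field_simp

lemma xN_tendsto {N : ℕ} (hN : 0 < N) : Tendsto (xN N) atImInfty (𝓝 0) := by
  have := UpperHalfPlane.qParam_tendsto_atImInfty (h := (N : ℝ)) (by exact_mod_cast hN)
  refine this.congr fun τ => ?_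
  simp [xN, Function.Periodic.qParam]

lemma xN_T {N : ℕ} (τ : ℍ) : xN N (ModularGroup.T • τ) = Complex.exp (2 * Real.pi * I / N) * xN N τ := by
  rw [xN, xN, ← Complex.exp_add, UpperHalfPlane.modular_T_smul]
  congr 1
  simp
  ring

lemma coe_T (τ : ℍ) : ((ModularGroup.T • τ : ℍ) : ℂ) = τ + 1 := by
  rw [UpperHalfPlane.modular_T_smul]
  simp
  ring

lemma coe_S (τ : ℍ) : ((ModularGroup.S • τ : ℍ) : ℂ) = -1 / (τ : ℂ) := by
  rw [UpperHalfPlane.modular_S_smul]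
  simp [neg_div]

open ArithmeticFunction.sigma in
lemma c2_eq (τ : ℍ) : c2 τ = (2 * (Real.pi : ℂ)) ^ 4 / 12 * ModularForm.E₄ τ := by
  have h := EisensteinSeries.q_expansion_bernoulli (k := 4) (by norm_num) (by decide) τ
  rw [ModularForm.E₄, h, c2]
  congr 1
  have hq : ‖Complex.exp (2 * Real.pi * I * (τ : ℂ))‖ < 1 := norm_qq τ.2
  have h2 := tsum_pow_div_one_sub_eq_tsum_sigma hq 3
  have h3 := tsum_pnat_eq_tsum_succ (f := fun n : ℕ => (n : ℂ) ^ 3 * Complex.exp (2 * Real.pi * I * (τ : ℂ)) ^ n /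
    (1 - Complex.exp (2 * Real.pi * I * (τ : ℂ)) ^ n))
  rw [h2] at h3
  push_cast at h3
  rw [← h3]
  simp only [zpow_natCast]
  have hb : bernoulli 4 = -1 / 30 := by
    rw [bernoulli_eq_bernoulli'_of_ne_one (by norm_num), bernoulli'_four]; 
  rw [hb]
  push_cast
  norm_num

lemma Delta_eq (τ : ℂ) : 0 < τ.im → Delta τ = (2 * (Real.pi : ℂ)) ^ 12 * (qq τ * Mp 1 (qq τ) ^ 24) := by
  intro h
  rw [Delta, mul_assoc, Mp]
  congr 2
  have := (multipliable_aux 1 (norm_qq h)).tprod_pow 24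
  simp only [one_mul] at this
  simp only [one_mul]
  rw [← this, qq]

lemma j_eq (τ : ℍ) : jfun τ = ModularForm.E₄ τ ^ 3 / (qq τ * Mp 1 (qq τ) ^ 24) := by
  rw [jfun, c2_eq, Delta_eq _ τ.2]
  have hp : (Real.pi : ℂ) ≠ 0 := by exact_mod_cast Real.pi_ne_zero
  have hM := Mp_one_ne τ.2
  have hq : qq τ ≠ 0 := Complex.exp_ne_zero _
  field_simp

noncomputable def JJ (τ : ℍ) : ℂ := jfun τ

lemma JJ_eq (τ : ℍ) : JJ τ = ModularForm.E₄ τ ^ 3 / ModularForm.discriminant τ := by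
  rw [JJ, j_eq, ModularForm.discriminant, eta24]

def Inv (f : ℍ → ℂ) : Prop := (∀ τ, f (ModularGroup.S • τ) = f τ) ∧ (∀ τ, f (ModularGroup.T • τ) = f τ)

def Holo (f : ℍ → ℂ) : Prop := MDifferentiable 𝓘(ℂ) 𝓘(ℂ) f

lemma aux4 {d D : ℂ} (e : ℂ) (hd : d ≠ 0) (hD : D ≠ 0) :
    (d ^ (4 : ℤ) * e) ^ 3 / (d ^ (12 : ℤ) * D) = e ^ 3 / D := by
  have h4 : d ^ (4 : ℤ) = d ^ 4 := zpow_ofNat d 4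
  have h12 : d ^ (12 : ℤ) = d ^ 12 := zpow_ofNat d 12
  rw [h4, h12]
  field_simp

lemma JJ_inv : Inv JJ := by
  have key : ∀ (γ : SL(2, ℤ)) (τ : ℍ), JJ (γ • τ) = JJ τ := by
    intro γ τ
    have i4 : SlashInvariantFormClass (ModularForm 𝒮ℒ 4) (CongruenceSubgroup.Gamma 1) 4 :=
      CongruenceSubgroup.Gamma_one_coe_eq_SL ▸ inferInstance
    have i12 : SlashInvariantFormClass (CuspForm 𝒮ℒ 12) (CongruenceSubgroup.Gamma 1) 12 :=
      CongruenceSubgroup.Gamma_one_coe_eq_SL ▸ inferInstance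
    have h4 := SlashInvariantForm.slash_action_eqn_SL'' ModularForm.E₄ (CongruenceSubgroup.mem_Gamma_one γ) τ
    have h12 := SlashInvariantForm.slash_action_eqn_SL'' CuspForm.discriminant (CongruenceSubgroup.mem_Gamma_one γ) τ
    simp only [CuspForm.coe_discriminant] at h12
    rw [JJ_eq, JJ_eq, h4, h12]
    have hd := UpperHalfPlane.denom_ne_zero γ τ
    have hD := ModularForm.discriminant_ne_zero τ
    exact aux4 _ hd hD
  exact ⟨key _, key _⟩

lemma JJ_holo : Holo JJ := by
  have h4 : Holo ModularForm.E₄ := ModularFormClass.holo ModularForm.E₄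
  have h12 : Holo CuspForm.discriminant := CuspFormClass.holo CuspForm.discriminant
  unfold Holo at *
  rw [UpperHalfPlane.mdifferentiable_iff] at *
  refine ((h4.pow 3).div h12 ?_).congr ?_
  · intro z hz
    exact ModularForm.discriminant_ne_zero _
  · intro z hz
    simp [JJ_eq]

open ArithmeticFunction.sigma in
lemma E4_Ex {N : ℕ} (hN : 0 < N) : Ex atImInfty (xN N) (fun τ => ModularForm.E₄ τ) ∧
    Tendsto (fun τ => ModularForm.E₄ τ) atImInfty (𝓝 1) := by
  have hx := xN_tendsto hN
  have h4 : Ex atImInfty (xN N) (fun τ => ∑' n : ℕ, (σ 3 (n + 1) : ℂ) * (xN N τ ^ N) ^ n) := by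
    refine Ex_series hx (fun n => natCast_mem _ _) ?_ hN
    have := (summable_nat_add_iff 1).2 (summable_norm_pow_mul_geometric_of_norm_lt_one (R := ℝ) 4 (r := 1 / 2) (by norm_num))
    have := this.mul_right 2
    refine Summable.of_nonneg_of_le (fun n => by positivity) (fun n => ?_) this
    have hs := ArithmeticFunction.sigma_le_pow_succ 3 (n + 1)
    have hs' : ((σ 3 (n + 1) : ℕ) : ℝ) ≤ ((n + 1 : ℕ) : ℝ) ^ 4 := by exact_mod_cast hs
    rw [Complex.norm_natCast, norm_mul, Real.norm_of_nonneg (by positivity), Real.norm_of_nonneg (by positivity), pow_succ (1 / 2 : ℝ)]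
    rw [show ((n + 1 : ℕ) : ℝ) ^ 4 * ((1 / 2) ^ n * (1 / 2)) * 2 = ((n + 1 : ℕ) : ℝ) ^ 4 * (1 / 2) ^ n by ring]
    gcongr
  have e : ∀ τ : ℍ, ModularForm.E₄ τ = 1 + 240 * ((∑' n : ℕ, (σ 3 (n + 1) : ℂ) * (xN N τ ^ N) ^ n) * xN N τ ^ N) := by
    intro τ
    have h := EisensteinSeries.q_expansion_bernoulli (k := 4) (by norm_num) (by decide) τ
    have hb : bernoulli 4 = -1 / 30 := by
      rw [bernoulli_eq_bernoulli'_of_ne_one (by norm_num), bernoulli'_four]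
    have h3 := tsum_pnat_eq_tsum_succ (f := fun n : ℕ => (σ 3 n : ℂ) * Complex.exp (2 * Real.pi * I * (τ : ℂ)) ^ n)
    rw [ModularForm.E₄, h, hb]
    simp only [zpow_natCast]
    rw [h3, ← tsum_mul_right, xN_pow hN]
    push_cast
    norm_num
    refine tsum_congr fun n => ?_
    rw [qq, pow_succ]; ring
  have h5 : Ex atImInfty (xN N) (fun τ => (∑' n : ℕ, (σ 3 (n + 1) : ℂ) * (xN N τ ^ N) ^ n) * xN N τ ^ N) :=
    h4.mul hx (Ex.var.pow hx N)
  constructor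
  · simp only [e]
    exact (Ex.const (one_mem RR)).add ((Ex.const (c := 240) (by exact_mod_cast natCast_mem RR 240)).mul hx h5)
  · obtain ⟨c, -, hc⟩ := h4.lim hx
    have := ((hc.mul (hx.pow N)).const_mul 240).const_add 1
    rw [zero_pow hN.ne'] at this
    simp only [← e] at this
    simpa using this

lemma JJ_Ex {N : ℕ} (hN : 0 < N) : Ex atImInfty (xN N) (fun τ => xN N τ ^ N * JJ τ) ∧
    Tendsto (fun τ => xN N τ ^ N * JJ τ) atImInfty (𝓝 1) := by
  have hx := xN_tendsto hN
  obtain ⟨h1, h2⟩ := E4_Ex hN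
  obtain ⟨h3, h4⟩ := Mp_Ex (l := atImInfty) hx (u := fun _ => 1) (v := fun τ : ℍ => qq τ) (c := 1) (one_mem RR)
    (N := N) (m := N) hN hN (fun τ => (xN_pow hN τ).symm) (fun τ => by simp [xN_pow hN])
  have h5 := (h3.pow hx 24).inv hx (xN_ne N) (by simpa using h4.pow 24)
  have e : ∀ τ : ℍ, xN N τ ^ N * JJ τ = ModularForm.E₄ τ ^ 3 * (Mp 1 (qq τ) ^ 24)⁻¹ := by
    intro τ
    rw [xN_pow hN, JJ, j_eq]
    have hM := Mp_one_ne τ.2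
    have hq : qq τ ≠ 0 := Complex.exp_ne_zero _
    field_simp
  simp only [e]
  refine ⟨(h1.pow hx 3).mul hx h5, ?_⟩
  have := (h2.pow 3).mul ((h4.pow 24).inv₀ (by simp))
  simpa using this

end Sieg


namespace Sieg

open UpperHalfPlane hiding I
open Filter Topology Asymptotics
open scoped MatrixGroups Manifold ModularForm

lemma slash_zero_eq (f : ℍ → ℂ) (γ : SL(2, ℤ)) (h : ∀ τ, f (γ • τ) = f τ) : f ∣[(0 : ℤ)] γ = f := by
  ext τ
  rw [ModularForm.SL_slash_apply, h]
  simp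

lemma wt0 {f : ℍ → ℂ} (hf : Holo f) (hi : Inv f) (hb : IsBoundedAtImInfty f) : ∃ c, ∀ τ, f τ = c := by
  have hS := slash_zero_eq f _ hi.1
  have hT := slash_zero_eq f _ hi.2
  let g : ModularForm 𝒮ℒ 0 :=
    { toFun := f
      slash_action_eq' := by
        intro A hA
        obtain ⟨A, rfl⟩ := hA
        exact SlashInvariantForm.slash_action_generators_SL2Z hS hT A
      holo' := hf
      bdd_at_cusps' := by
        intro c hc
        rw [Subgroup.IsArithmetic.isCusp_iff_isCusp_SL2Z] at hc
        rw [OnePoint.isBoundedAt_iff_forall_SL2Z hc]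
        intro γ _
        rw [SlashInvariantForm.slash_action_generators_SL2Z hS hT]
        exact hb }
  obtain ⟨c, hc⟩ := ModularFormClass.levelOne_weight_zero_const g
  exact ⟨c, fun τ => congrFun hc τ⟩

lemma Holo.mul {f g : ℍ → ℂ} (hf : Holo f) (hg : Holo g) : Holo (fun τ => f τ * g τ) := by
  unfold Holo at *
  rw [UpperHalfPlane.mdifferentiable_iff] at *
  exact DifferentiableOn.mul hf hg

lemma Holo.sub {f g : ℍ → ℂ} (hf : Holo f) (hg : Holo g) : Holo (fun τ => f τ - g τ) := by
  unfold Holo at *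
  rw [UpperHalfPlane.mdifferentiable_iff] at *
  exact DifferentiableOn.sub hf hg

lemma Holo.const (c : ℂ) : Holo (fun _ => c) := by
  unfold Holo at *
  rw [UpperHalfPlane.mdifferentiable_iff] at *
  exact differentiableOn_const c

lemma Holo.pow {f : ℍ → ℂ} (hf : Holo f) (n : ℕ) : Holo (fun τ => f τ ^ n) := by
  unfold Holo at *
  rw [UpperHalfPlane.mdifferentiable_iff] at *
  exact DifferentiableOn.pow hf n

lemma T_tendsto : Tendsto (fun τ : ℍ => ModularGroup.T • τ) atImInfty atImInfty := by
  have : Tendsto UpperHalfPlane.im atImInfty atTop := tendsto_comap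
  refine tendsto_comap_iff.2 (this.congr fun τ => ?_)
  have := congrArg Complex.im (coe_T τ)
  simpa using this.symm

theorem main_ind {N : ℕ} (hN : 0 < N) (A : Subring (ℍ → ℂ)) (hJ : JJ ∈ A)
    (hc : ∀ c ∈ RR, (fun _ => c) ∈ A) : ∀ (m : ℕ) (f : ℍ → ℂ), Holo f → Inv f →
    Ex atImInfty (xN N) (fun τ => xN N τ ^ m * f τ) → f ∈ A := by
  have hx := xN_tendsto hN
  intro m
  induction m with
  | zero =>
    intro f hf hi he
    simp only [pow_zero, one_mul] at he
    obtain ⟨c, hcR, hl⟩ := he.lim hx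
    obtain ⟨d, hd⟩ := wt0 hf hi (hl.isBigO_one ℝ)
    obtain rfl : f = fun _ => d := funext hd
    have : d = c := tendsto_nhds_unique tendsto_const_nhds hl
    exact hc _ (this ▸ hcR)
  | succ m ih =>
    intro f hf hi he
    have red : ∀ g : ℍ → ℂ, Holo g → Inv g → Ex atImInfty (xN N) (fun τ => xN N τ ^ (m + 1) * g τ) →
        Tendsto (fun τ => xN N τ ^ (m + 1) * g τ) atImInfty (𝓝 0) → g ∈ A := by
      intro g hg hgi hge hg0
      refine ih g hg hgi ?_
      refine (hge.div_var hx (xN_ne N) hg0).congr ?_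
      refine Eventually.of_forall fun τ => ?_
      have := xN_ne N τ
      simp only
      rw [pow_succ]
      field_simp
    obtain ⟨c, hcR, hl⟩ := he.lim hx
    by_cases h0 : c = 0
    · exact red f hf hi he (h0 ▸ hl)
    have hprim := Complex.isPrimitiveRoot_exp N hN.ne'
    have hz : Complex.exp (2 * Real.pi * I / N) ^ (m + 1) = 1 := by
      have h1 := hl.comp T_tendsto
      have h2 := hl.const_mul (Complex.exp (2 * Real.pi * I / N) ^ (m + 1))
      have h3 := tendsto_nhds_unique (h1.congr fun τ => ?_) h2
      · exact mul_right_cancel₀ h0 (by rw [one_mul]; exact h3.symm)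
      · simp only [Function.comp]
        rw [xN_T, hi.2, mul_pow, mul_assoc]
    obtain ⟨k, hk⟩ := (hprim.pow_eq_one_iff_dvd _).1 hz
    obtain ⟨hJe, hJl⟩ := JJ_Ex hN
    have e : ∀ τ : ℍ, xN N τ ^ (m + 1) * JJ τ ^ k = (xN N τ ^ N * JJ τ) ^ k := by
      intro τ
      rw [hk, mul_pow, pow_mul]
    have hm : (fun τ => f τ - c * JJ τ ^ k) ∈ A := by
      refine red _ (hf.sub ((Holo.const c).mul (JJ_holo.pow k))) ?_ ?_ ?_
      · exact ⟨fun τ => by simp only [hi.1 τ, JJ_inv.1 τ], fun τ => by simp only [hi.2 τ, JJ_inv.2 τ]⟩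
      · refine (he.sub ((Ex.const hcR).mul hx (hJe.pow hx k))).congr (Eventually.of_forall fun τ => ?_)
        simp only
        rw [← e]; ring
      · have := hl.sub ((hJl.pow k).const_mul c)
        rw [one_pow, mul_one, sub_self] at this
        refine this.congr fun τ => ?_
        rw [← e]; ring
    have := A.add_mem hm (A.mul_mem (hc c hcR) (A.pow_mem hJ k))
    convert this using 1
    ext τ
    simp

end Sieg


namespace Sieg

open UpperHalfPlane hiding I
open Filter Topology Asymptotics
open scoped MatrixGroups Manifold ModularForm

noncomputable def ze (N : ℕ) : ℂ := Complex.exp (2 * Real.pi * I / N)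

noncomputable def H (N : ℕ) (r s : ℤ) (τ : ℍ) : ℂ := G (r / N) (s / N) τ ^ N

lemma H_add1 {N : ℕ} (hN : 0 < N) (r s : ℤ) (τ : ℍ) : H N (r + N) s τ = H N r s τ := by
  have hN' : (N : ℂ) ≠ 0 := by exact_mod_cast hN.ne'
  have hN'' : (N : ℝ) ≠ 0 := by exact_mod_cast hN.ne'
  unfold H
  rw [show (((r + N : ℤ) : ℝ) / N) = (r : ℝ) / N + 1 by push_cast; field_simp, G_add1 _ _ τ.2, mul_pow,
    ← Complex.exp_nat_mul]
  have : (N : ℂ) * -(12 * Real.pi * I * ((s / N : ℝ) : ℂ)) = ((-6 * s : ℤ) : ℂ) * (2 * Real.pi * I) := by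
    push_cast; field_simp; ring
  rw [this, Complex.exp_int_mul_two_pi_mul_I, one_mul]

lemma H_add2 {N : ℕ} (hN : 0 < N) (r s : ℤ) (τ : ℍ) : H N r (s + N) τ = H N r s τ := by
  have hN' : (N : ℂ) ≠ 0 := by exact_mod_cast hN.ne'
  have hN'' : (N : ℝ) ≠ 0 := by exact_mod_cast hN.ne'
  unfold H
  rw [show (((s + N : ℤ) : ℝ) / N) = (s : ℝ) / N + 1 by push_cast; field_simp, G_add2, mul_pow,
    ← Complex.exp_nat_mul]
  have : (N : ℂ) * (12 * Real.pi * I * ((r / N : ℝ) : ℂ)) = ((6 * r : ℤ) : ℂ) * (2 * Real.pi * I) := by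
    push_cast; field_simp; ring
  rw [this, Complex.exp_int_mul_two_pi_mul_I, one_mul]

lemma per_aux {N : ℕ} {f : ℤ → ℂ} (h : ∀ r, f (r + N) = f r) {r r' : ℤ} (e : (r : ZMod N) = r') :
    f r = f r' := by
  have hp : Function.Periodic f (N : ℤ) := h
  obtain ⟨k, hk⟩ := (ZMod.intCast_eq_intCast_iff_dvd_sub _ _ _).1 e
  have := hp.int_mul k r
  rw [← this]
  congr 1
  push_cast at *
  linarith

lemma H_congr {N : ℕ} (hN : 0 < N) {r s r' s' : ℤ} (e : (r : ZMod N) = r') (e' : (s : ZMod N) = s') (τ : ℍ) :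
    H N r s τ = H N r' s' τ := by
  rw [per_aux (f := fun r => H N r s τ) (fun r => H_add1 hN r s τ) e,
    per_aux (f := fun s => H N r' s τ) (fun s => H_add2 hN r' s τ) e']

lemma H_T {N : ℕ} (r s : ℤ) (τ : ℍ) : H N r s (ModularGroup.T • τ) = H N r (r + s) τ := by
  unfold H
  rw [coe_T, G_T]
  push_cast
  rw [add_div]

lemma H_S {N : ℕ} (r s : ℤ) (τ : ℍ) : H N r s (ModularGroup.S • τ) = H N s (-r) τ := by
  unfold H
  rw [coe_S, G_S _ _ τ.2]
  push_cast
  rw [neg_div]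

lemma G_ne_zero (a b : ℝ) {τ : ℂ} (h : 0 < τ.im) (hab : ¬ ∃ m n : ℤ, a = m ∧ b = n) : G a b τ ≠ 0 := by
  rw [← siegel_pow a b h]
  exact pow_ne_zero _ (siegel_ne_zero a b h hab)

lemma H_ne_zero {N : ℕ} (hN : 1 < N) {r s : ℤ} (hc : IsCoprime (r : ZMod N) (s : ZMod N)) (τ : ℍ) :
    H N r s τ ≠ 0 := by
  refine pow_ne_zero _ (G_ne_zero _ _ τ.2 ?_)
  rintro ⟨m, n, hm, hn⟩
  have hN'' : (N : ℝ) ≠ 0 := by positivity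
  rw [div_eq_iff hN''] at hm hn
  have hm' : r = m * N := by exact_mod_cast hm
  have hn' : s = n * N := by exact_mod_cast hn
  subst hm' hn'
  have : Fact (1 < N) := ⟨hN⟩
  simp at hc
  exact not_isCoprime_zero_zero hc

lemma H_holo {N : ℕ} (r s : ℤ) : Holo (H N r s) := by
  unfold Holo H
  rw [UpperHalfPlane.mdifferentiable_iff]
  have h : DifferentiableOn ℂ (fun τ => G (r / N) (s / N) τ ^ N) {τ | 0 < τ.im} := by
    unfold G
    refine DifferentiableOn.pow (DifferentiableOn.mul (DifferentiableOn.mul ?_ ?_) (DifferentiableOn.pow (F_comp_diff _ (by fun_prop)) 12)) N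
    · unfold qq; fun_prop
    · fun_prop
  refine h.congr fun z hz => ?_
  simp [ofComplex_apply_of_im_pos hz]

lemma Holo.inv {f : ℍ → ℂ} (hf : Holo f) (h0 : ∀ τ, f τ ≠ 0) : Holo (fun τ => (f τ)⁻¹) := by
  unfold Holo at *
  rw [UpperHalfPlane.mdifferentiable_iff] at *
  exact DifferentiableOn.inv hf fun z hz => h0 _

lemma ze_prim {N : ℕ} (hN : 0 < N) : IsPrimitiveRoot (ze N) N := Complex.isPrimitiveRoot_exp N hN.ne'

lemma ze_mem {N : ℕ} (hN : 0 < N) : ze N ∈ RR := (ze_prim hN).isIntegral hN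

lemma ze_ne (N : ℕ) : ze N ≠ 0 := Complex.exp_ne_zero _

lemma ze_inv_mem {N : ℕ} (hN : 0 < N) : (ze N)⁻¹ ∈ RR := (ze_prim hN).inv.isIntegral hN

lemma unit_quot {N : ℕ} (hN : 0 < N) {s : ℕ} (hs : IsUnit (s : ZMod N)) :
    (1 - ze N) / (1 - ze N ^ s) ∈ RR := by
  have : NeZero N := ⟨hN.ne'⟩
  obtain ⟨t, ht⟩ := hs.exists_right_inv
  have ht' : ((s * t.val : ℕ) : ZMod N) = (1 : ℕ) := by
    push_cast; rw [ZMod.natCast_zmod_val, ht]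
  have e : ze N = (ze N ^ s) ^ t.val := by
    rw [← pow_mul]
    rw [ZMod.natCast_eq_natCast_iff] at ht'
    conv_lhs => rw [← pow_one (ze N)]
    rw [pow_eq_pow_mod 1 (ze_prim hN).pow_eq_one, pow_eq_pow_mod (s * t.val) (ze_prim hN).pow_eq_one]
    congr 1
    exact ht'.symm
  by_cases h1 : ze N ^ s = 1
  · rw [h1]; simp
  have : (1 - ze N) / (1 - ze N ^ s) = ∑ i ∈ Finset.range t.val, (ze N ^ s) ^ i := by
    have h2 : 1 - ze N ^ s ≠ 0 := fun h => h1 (sub_eq_zero.1 h).symm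
    rw [div_eq_iff h2, mul_comm, mul_neg_geom_sum, ← e]
  rw [this]
  exact sum_mem fun i _ => pow_mem (pow_mem (ze_mem hN) _) _

noncomputable def PP (N r s : ℕ) (τ : ℍ) : ℂ := (1 - ze N ^ s * xN N τ ^ r) *
  (Mp (ze N ^ s * xN N τ ^ r) (qq τ) * Mp ((ze N ^ s * xN N τ ^ r)⁻¹) (qq τ))

lemma H_eq {N : ℕ} (hN : 0 < N) (r s : ℕ) (τ : ℍ) :
    H N r s τ * xN N τ ^ (6 * r * N) = xN N τ ^ (6 * r ^ 2 + N ^ 2) * ze N ^ (6 * r * s) * PP N r s τ ^ (12 * N) := by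
  have hN' : (N : ℂ) ≠ 0 := by exact_mod_cast hN.ne'
  have e1 : Complex.exp (2 * Real.pi * I * ((((r : ℤ) : ℝ) / N : ℝ) * τ + (((s : ℤ) : ℝ) / N : ℝ))) = ze N ^ s * xN N τ ^ r := by
    rw [ze, xN, ← Complex.exp_nat_mul, ← Complex.exp_nat_mul, ← Complex.exp_add]
    congr 1; push_cast; field_simp; ring
  unfold H G F Fr
  rw [e1, Complex.exp_neg (2 * Real.pi * I * _), e1]
  have e2 : qq τ ^ N = xN N τ ^ (N ^ 2) := by rw [← xN_pow hN, ← pow_mul, sq]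
  have e3 : Complex.exp (12 * Real.pi * I * ((((r : ℤ) : ℝ) / N : ℝ) * ((((r : ℤ) : ℝ) / N : ℝ) * τ + (((s : ℤ) : ℝ) / N : ℝ)))) ^ N
      = xN N τ ^ (6 * r ^ 2) * ze N ^ (6 * r * s) := by
    rw [ze, xN, ← Complex.exp_nat_mul, ← Complex.exp_nat_mul, ← Complex.exp_nat_mul, ← Complex.exp_add]
    congr 1; push_cast; field_simp; ring
  have e4 : Complex.exp (-(Real.pi * I * ((((r : ℤ) : ℝ) / N : ℝ) * τ + (((s : ℤ) : ℝ) / N : ℝ)))) ^ (12 * N) * xN N τ ^ (6 * r * N) = 1 := by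
    rw [xN, ← Complex.exp_nat_mul, ← Complex.exp_nat_mul, ← Complex.exp_add, Complex.exp_eq_one_iff]
    refine ⟨-6 * s, ?_⟩
    push_cast; field_simp; ring
  rw [mul_pow, mul_pow, e2, e3, ← pow_mul, mul_assoc (Complex.exp (-_)), mul_left_comm (_ - _), mul_pow,
    show (1 - ze N ^ s * xN N τ ^ r) *
        (Mp (ze N ^ s * xN N τ ^ r) (qq τ) * Mp ((ze N ^ s * xN N τ ^ r)⁻¹) (qq τ)) = PP N r s τ from rfl]
  rw [pow_add]
  linear_combination (xN N τ ^ N ^ 2 * (xN N τ ^ (6 * r ^ 2) * ze N ^ (6 * r * s)) * PP N r s τ ^ (12 * N)) * e4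

lemma PP_Ex {N : ℕ} (hN : 1 < N) {r s : ℕ} (hr : r < N) (hc : IsCoprime (r : ZMod N) (s : ZMod N)) :
    Ex atImInfty (xN N) (fun τ => (1 - ze N) / PP N r s τ) := by
  have hN0 : 0 < N := by omega
  have hx := xN_tendsto hN0
  obtain ⟨a1, a2⟩ := Mp_Ex (l := atImInfty) hx (u := fun τ : ℍ => ze N ^ s * xN N τ ^ r) (v := fun τ : ℍ => qq τ)
    (c := ze N ^ s) (pow_mem (ze_mem hN0) s)
    (N := N) (m := r + N) hN0 (by omega) (fun τ => (xN_pow hN0 τ).symm)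
      (fun τ => by rw [← xN_pow hN0, mul_assoc, ← pow_add])
  obtain ⟨b1, b2⟩ := Mp_Ex (l := atImInfty) hx (u := fun τ : ℍ => (ze N ^ s * xN N τ ^ r)⁻¹) (v := fun τ : ℍ => qq τ)
    (c := (ze N)⁻¹ ^ s) (pow_mem (ze_inv_mem hN0) s)
    (N := N) (m := N - r) hN0 (by omega) (fun τ => (xN_pow hN0 τ).symm)
      (fun τ => by
        rw [← xN_pow hN0, mul_inv, inv_pow, mul_assoc]
        congr 1
        rw [pow_sub₀ _ (xN_ne N τ) hr.le, mul_comm])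
  have c1 := a1.mul hx b1
  have c2 := a2.mul b2
  rw [mul_one] at c2
  unfold PP
  rcases Nat.eq_zero_or_pos r with rfl | hr0
  · have hu : IsUnit (s : ZMod N) := by simpa [isCoprime_zero_left] using hc
    refine ((Ex.const (unit_quot hN0 hu)).mul hx (c1.inv hx (xN_ne N) c2)).congr (Eventually.of_forall fun τ => ?_)
    simp only [pow_zero, mul_one]
    rw [div_mul_eq_div_div, ← div_eq_mul_inv]
  · have d1 : Ex atImInfty (xN N) (fun τ => 1 - ze N ^ s * xN N τ ^ r) :=
      (Ex.const (one_mem RR)).sub ((Ex.const (pow_mem (ze_mem hN0) s)).mul hx (Ex.var.pow hx r))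
    have d2 : Tendsto (fun τ => 1 - ze N ^ s * xN N τ ^ r) atImInfty (𝓝 1) := by
      have := ((hx.pow r).const_mul (ze N ^ s)).const_sub 1
      rwa [zero_pow hr0.ne', mul_zero, sub_zero] at this
    have f2 := d2.mul c2
    rw [mul_one] at f2
    have f3 := (Ex.const (sub_mem (one_mem RR) (ze_mem hN0))).mul hx ((d1.mul hx c1).inv hx (xN_ne N) f2)
    refine f3.congr (Eventually.of_forall fun τ => ?_)
    simp only [div_eq_mul_inv]

lemma H_Ex {N : ℕ} (hN : 1 < N) {r s : ℕ} (hr : r < N) (hc : IsCoprime (r : ZMod N) (s : ZMod N)) :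
    ∃ m : ℕ, Ex atImInfty (xN N) (fun τ => xN N τ ^ m * ((1 - ze N) ^ (12 * N) * (H N r s τ)⁻¹)) := by
  have hN0 : 0 < N := by omega
  have hx := xN_tendsto hN0
  refine ⟨6 * r ^ 2 + N ^ 2, ?_⟩
  have h1 := ((Ex.var.pow hx (6 * r * N)).mul hx (Ex.const (pow_mem (ze_inv_mem hN0) (6 * r * s)))).mul hx
    ((PP_Ex hN hr hc).pow hx (12 * N))
  refine h1.congr (Eventually.of_forall fun τ => ?_)
  have h2 := H_eq hN0 r s τ
  have h3 : H N r s τ ≠ 0 := H_ne_zero hN (by simpa using hc) τ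
  have h4 := pow_ne_zero (6 * r * s) (ze_ne N)
  have h5 := pow_ne_zero (6 * r * N) (xN_ne N τ)
  have h6 : PP N r s τ ^ (12 * N) ≠ 0 := by
    intro h
    rw [h, mul_zero] at h2
    exact mul_ne_zero h3 h5 h2
  simp only [div_pow, inv_pow]
  rw [mul_comm] at h2
  field_simp
  linear_combination (1 - ze N) ^ (12 * N) * h2

end Sieg


namespace Sieg

open UpperHalfPlane hiding I
open Filter Topology Asymptotics
open scoped MatrixGroups Manifold ModularForm

lemma Holo.add {f g : ℍ → ℂ} (hf : Holo f) (hg : Holo g) : Holo (fun τ => f τ + g τ) := by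
  unfold Holo at *
  rw [UpperHalfPlane.mdifferentiable_iff] at *
  exact DifferentiableOn.add hf hg

/-- Holomorphic functions with a finite-order integral expansion at infinity. -/
noncomputable def KK {N : ℕ} (hN : 0 < N) : Subring (ℍ → ℂ) where
  carrier := {f | Holo f ∧ ∃ m : ℕ, Ex atImInfty (xN N) (fun τ => xN N τ ^ m * f τ)}
  mul_mem' := by
    rintro f g ⟨hf, m, hm⟩ ⟨hg, n, hn⟩
    refine ⟨hf.mul hg, m + n, ?_⟩
    refine (hm.mul (xN_tendsto hN) hn).congr (Eventually.of_forall fun τ => ?_)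
    simp only [Pi.mul_apply]; ring
  one_mem' := ⟨Holo.const 1, 0, by simpa using Ex.const (one_mem RR)⟩
  zero_mem' := ⟨Holo.const 0, 0, by simpa using Ex.const (zero_mem RR)⟩
  add_mem' := by
    rintro f g ⟨hf, m, hm⟩ ⟨hg, n, hn⟩
    have hx := xN_tendsto hN
    refine ⟨hf.add hg, m + n, ?_⟩
    refine (((Ex.var.pow hx n).mul hx hm).add ((Ex.var.pow hx m).mul hx hn)).congr (Eventually.of_forall fun τ => ?_)
    simp only [Pi.add_apply]; ring
  neg_mem' := by
    rintro f ⟨hf, m, hm⟩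
    refine ⟨?_, m, hm.neg.congr (Eventually.of_forall fun τ => ?_)⟩
    · have := (Holo.const 0).sub hf
      simp only [zero_sub] at this
      exact this
    · simp

/-- The conjugate of the twelve-N-th power of `(1 - ζ)/g`. -/
noncomputable def hh (N : ℕ) [NeZero N] (b : ZMod N × ZMod N) (τ : ℍ) : ℂ :=
  (1 - ze N) ^ (12 * N) * (H N (b.1.val : ℤ) (b.2.val : ℤ) τ)⁻¹

lemma hh_eq {N : ℕ} [NeZero N] (r s : ℤ) (τ : ℍ) :
    hh N (r, s) τ = (1 - ze N) ^ (12 * N) * (H N r s τ)⁻¹ := by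
  unfold hh
  rw [H_congr (Nat.pos_of_neZero N) (r := _) (s := _) (r' := r) (s' := s) (by simp) (by simp)]

lemma hh_mem {N : ℕ} [NeZero N] (hN : 1 < N) {b : ZMod N × ZMod N} (hb : IsCoprime b.1 b.2) :
    hh N b ∈ KK (Nat.pos_of_neZero N) := by
  have hc : IsCoprime ((b.1.val : ℕ) : ZMod N) ((b.2.val : ℕ) : ZMod N) := by simpa using hb
  refine ⟨(Holo.const _).mul ((H_holo _ _).inv fun τ => H_ne_zero hN (by simpa using hb) τ), ?_⟩
  exact H_Ex hN (ZMod.val_lt b.1) hc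

lemma hh_S {N : ℕ} [NeZero N] (b : ZMod N × ZMod N) (τ : ℍ) :
    hh N b (ModularGroup.S • τ) = hh N (b.2, -b.1) τ := by
  have : (b.2, -b.1) = ((((b.2.val : ℕ) : ℤ) : ZMod N), ((-((b.1.val : ℕ) : ℤ) : ℤ) : ZMod N)) := by simp
  rw [this, hh_eq, hh, H_S]

lemma hh_T {N : ℕ} [NeZero N] (b : ZMod N × ZMod N) (τ : ℍ) :
    hh N b (ModularGroup.T • τ) = hh N (b.1, b.1 + b.2) τ := by
  have : (b.1, b.1 + b.2) = ((((b.1.val : ℕ) : ℤ) : ZMod N), ((((b.1.val : ℕ) : ℤ) + ((b.2.val : ℕ) : ℤ) : ℤ) : ZMod N)) := by simp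
  rw [this, hh_eq, hh, H_T]

open Classical in
noncomputable def BB (N : ℕ) [NeZero N] : Finset (ZMod N × ZMod N) := Finset.univ.filter fun b => IsCoprime b.1 b.2

noncomputable def pol (N : ℕ) [NeZero N] : Polynomial (ℍ → ℂ) :=
  ∏ b ∈ BB N, (Polynomial.X - Polynomial.C (hh N b))

noncomputable def act (γ : SL(2, ℤ)) : (ℍ → ℂ) →+* (ℍ → ℂ) :=
  RingHom.pi fun τ => Pi.evalRingHom (fun _ => ℂ) (γ • τ)

lemma act_apply (γ : SL(2, ℤ)) (f : ℍ → ℂ) (τ : ℍ) : act γ f τ = f (γ • τ) := rfl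

lemma pol_S (N : ℕ) [NeZero N] : (pol N).map (act ModularGroup.S) = pol N := by
  unfold pol
  rw [Polynomial.map_prod]
  refine Finset.prod_bij' (fun b _ => (b.2, -b.1)) (fun b _ => (-b.2, b.1)) ?_ ?_ ?_ ?_ ?_
  · intro b hb
    simp only [BB, Finset.mem_filter, Finset.mem_univ, true_and] at *
    exact hb.symm.neg_right
  · intro b hb
    simp only [BB, Finset.mem_filter, Finset.mem_univ, true_and] at *
    exact hb.symm.neg_left
  · intro b _; simp
  · intro b _; simp
  · intro b _
    have : act ModularGroup.S (hh N b) = hh N (b.2, -b.1) := funext fun τ => hh_S b τ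
    simp [this]

lemma pol_T (N : ℕ) [NeZero N] : (pol N).map (act ModularGroup.T) = pol N := by
  unfold pol
  rw [Polynomial.map_prod]
  refine Finset.prod_bij' (fun b _ => (b.1, b.1 + b.2)) (fun b _ => (b.1, b.2 - b.1)) ?_ ?_ ?_ ?_ ?_
  · intro b hb
    simp only [BB, Finset.mem_filter, Finset.mem_univ, true_and] at *
    have := hb.add_mul_left_right 1
    rwa [mul_one, add_comm] at this
  · intro b hb
    simp only [BB, Finset.mem_filter, Finset.mem_univ, true_and] at *
    have := hb.add_mul_left_right (-1)
    rwa [mul_neg_one, ← sub_eq_add_neg] at this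
  · intro b _; simp
  · intro b _; simp
  · intro b _
    have : act ModularGroup.T (hh N b) = hh N (b.1, b.1 + b.2) := funext fun τ => hh_T b τ
    simp [this]

lemma pol_inv (N : ℕ) [NeZero N] (i : ℕ) : Inv ((pol N).coeff i) := by
  constructor
  · intro τ
    have := congrArg (fun p => p.coeff i τ) (pol_S N)
    simpa [act_apply] using this
  · intro τ
    have := congrArg (fun p => p.coeff i τ) (pol_T N)
    simpa [act_apply] using this

lemma pol_mem {N : ℕ} [NeZero N] (hN : 1 < N) (i : ℕ) : (pol N).coeff i ∈ KK (Nat.pos_of_neZero N) := by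
  have : pol N ∈ Polynomial.lifts (KK (Nat.pos_of_neZero N)).subtype := by
    unfold pol
    refine prod_mem fun b hb => ?_
    simp only [BB, Finset.mem_filter, Finset.mem_univ, true_and] at hb
    rw [Polynomial.lifts_iff_coeff_lifts] 
    intro n
    rw [Polynomial.coeff_sub, Polynomial.coeff_X, Polynomial.coeff_C, Set.mem_range]
    have hm : ((if 1 = n then (1 : ℍ → ℂ) else 0) - if n = 0 then hh N b else 0) ∈ KK (Nat.pos_of_neZero N) := by
      refine sub_mem ?_ ?_
      · split_ifs
        · exact one_mem _
        · exact zero_mem _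
      · split_ifs
        · exact hh_mem hN hb
        · exact zero_mem _
    exact ⟨⟨_, hm⟩, rfl⟩
  rw [Polynomial.lifts_iff_coeff_lifts] at this
  obtain ⟨y, hy⟩ := this i
  rw [← hy]
  exact y.2

lemma hh_integral {N : ℕ} [NeZero N] (hN : 1 < N) {b : ZMod N × ZMod N} (hb : IsCoprime b.1 b.2) :
    IsIntegral (Algebra.adjoin ℤ {JJ}) (hh N b) := by
  set S := Algebra.adjoin ℤ {JJ}
  set A := integralClosure S (ℍ → ℂ)
  have hJ : JJ ∈ A := by
    exact isIntegral_algebraMap (R := S) (A := ℍ → ℂ) (x := ⟨JJ, Algebra.self_mem_adjoin_singleton ℤ JJ⟩)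
  have hcon : ∀ c ∈ RR, (fun _ => c) ∈ A := by
    intro c hc
    have hc : IsIntegral ℤ c := hc
    have h2 : IsIntegral ℤ (fun _ : ℍ => c) := hc.map (Pi.constAlgHom ℤ ℍ ℂ)
    exact h2.tower_top
  have hcoef : ∀ i, (pol N).coeff i ∈ A := by
    intro i
    obtain ⟨h1, m, h2⟩ := pol_mem hN i
    exact main_ind (Nat.pos_of_neZero N) A.toSubring hJ hcon m _ h1 (pol_inv N i) h2
  have hmon : (pol N).Monic := Polynomial.monic_prod_of_monic _ _ fun b _ => Polynomial.monic_X_sub_C _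
  have hl : pol N ∈ Polynomial.lifts (algebraMap A (ℍ → ℂ)) := by
    rw [Polynomial.lifts_iff_coeff_lifts]
    exact fun i => ⟨⟨_, hcoef i⟩, rfl⟩
  obtain ⟨q, hq, -, hqm⟩ := Polynomial.lifts_and_natDegree_eq_and_monic hl hmon
  have hInt : IsIntegral A (hh N b) := by
    refine ⟨q, hqm, ?_⟩
    rw [← Polynomial.eval_map, hq, pol, Polynomial.eval_prod]
    refine Finset.prod_eq_zero (i := b) ?_ (by simp)
    simp [BB, hb]
  have : Algebra.IsIntegral S A := inferInstance
  exact isIntegral_trans _ hInt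

lemma unpack {f : ℍ → ℂ} (hf : IsIntegral (Algebra.adjoin ℤ {JJ}) f) :
    ∃ n : ℕ, 1 ≤ n ∧ ∃ P : ℕ → Polynomial ℤ, ∀ τ : ℍ,
      f τ ^ n + ∑ i ∈ Finset.range n, Polynomial.aeval (jfun τ) (P i) * f τ ^ i = 0 := by
  obtain ⟨p, hp, h0⟩ := hf
  have hP : ∀ i, ∃ Q : Polynomial ℤ, Polynomial.aeval JJ Q = (p.coeff i : ℍ → ℂ) := by
    intro i
    have h1 : ∀ g ∈ Algebra.adjoin ℤ {JJ}, ∃ Q : Polynomial ℤ, Polynomial.aeval JJ Q = g := by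
      intro g hg
      rwa [Algebra.adjoin_singleton_eq_range_aeval] at hg
    exact h1 _ (p.coeff i).2
  choose P hP using hP
  have key : ∀ τ : ℍ, f τ ^ p.natDegree + ∑ i ∈ Finset.range p.natDegree, Polynomial.aeval (jfun τ) (P i) * f τ ^ i = 0 := by
    intro τ
    rw [Polynomial.eval₂_eq_sum_range, Finset.sum_range_succ, hp.coeff_natDegree, map_one, one_mul] at h0
    have h1 := congrFun h0 τ
    simp only [Pi.add_apply, Finset.sum_apply, Pi.mul_apply, Pi.pow_apply, Pi.zero_apply] at h1
    rw [add_comm, ← h1]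
    congr 1
    refine Finset.sum_congr rfl fun i _ => ?_
    congr 1
    have h2 := congrFun (hP i) τ
    have h3 : Polynomial.aeval (jfun τ) (P i) = (Polynomial.aeval JJ (P i)) τ := by
      have := Polynomial.aeval_algHom_apply (Pi.evalAlgHom ℤ (fun _ : ℍ => ℂ) τ) JJ (P i)
      exact this
    rw [h3, h2]
    rfl
  refine ⟨p.natDegree, ?_, P, key⟩
  by_contra hlt
  have h0 : p.natDegree = 0 := by omega
  have := key UpperHalfPlane.I
  rw [h0] at this
  simp at this

end Sieg

/-- For `a = (a₁,a₂) ∈ ℚ² ∖ ℤ²` with `0 ≤ a₁ < 1` and `N` the exact order of `a` in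
`(ℚ/ℤ)²`, with `ζ_N = e^{2πi/N}`: `g_a` is nonvanishing on `ℍ` and `(1 − ζ_N)·g_a⁻¹` is
integral over `ℤ[j]`. -/
theorem stmt_17 (a₁ a₂ : ℚ) (h0 : 0 ≤ a₁) (h1 : a₁ < 1)
    (hnZ : ¬∃ m n : ℤ, a₁ = (m : ℚ) ∧ a₂ = (n : ℚ))
    (N : ℕ) (hNpos : 0 < N)
    (hNa : (∃ k : ℤ, (N : ℚ) * a₁ = (k : ℚ)) ∧ (∃ k : ℤ, (N : ℚ) * a₂ = (k : ℚ)))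
    (hNmin : ∀ M : ℕ, 0 < M →
      ((∃ k : ℤ, (M : ℚ) * a₁ = (k : ℚ)) ∧ (∃ k : ℤ, (M : ℚ) * a₂ = (k : ℚ))) → N ≤ M) :
    (∀ τ : ℂ, 0 < τ.im → siegel (a₁ : ℝ) (a₂ : ℝ) τ ≠ 0) ∧
    ∃ n : ℕ, 1 ≤ n ∧ ∃ P : ℕ → Polynomial ℤ,
      ∀ τ : ℂ, 0 < τ.im →
        ((1 - Complex.exp (2 * Real.pi * I / (N : ℂ))) / siegel (a₁ : ℝ) (a₂ : ℝ) τ) ^ n +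
          ∑ i ∈ Finset.range n,
            Polynomial.aeval (jfun τ) (P i) *
              ((1 - Complex.exp (2 * Real.pi * I / (N : ℂ))) / siegel (a₁ : ℝ) (a₂ : ℝ) τ) ^ i
          = 0 := by
  have hnR : ¬∃ m n : ℤ, (a₁ : ℝ) = m ∧ (a₂ : ℝ) = n := by
    rintro ⟨m, n, hm, hn⟩
    exact hnZ ⟨m, n, by exact_mod_cast hm, by exact_mod_cast hn⟩
  refine ⟨fun τ h => Sieg.siegel_ne_zero _ _ h hnR, ?_⟩
  obtain ⟨⟨r, hr⟩, ⟨s, hs⟩⟩ := hNa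
  have hN1 : 1 < N := by
    by_contra h
    have : N = 1 := by omega
    subst this
    exact hnZ ⟨r, s, by simpa using hr, by simpa using hs⟩
  have : NeZero N := ⟨hNpos.ne'⟩
  have hcop : IsCoprime (r : ZMod N) (s : ZMod N) := by
    set d := Nat.gcd (Int.gcd r s) N with hd
    have hdpos : 0 < d := Nat.gcd_pos_of_pos_right _ hNpos
    have hdN : d ∣ N := Nat.gcd_dvd_right _ _
    have hdg : d ∣ Int.gcd r s := Nat.gcd_dvd_left _ _
    obtain ⟨M, hM⟩ := hdN
    have hdr : (d : ℤ) ∣ r := (Int.natCast_dvd_natCast.2 hdg).trans (Int.gcd_dvd_left _ _)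
    have hds : (d : ℤ) ∣ s := (Int.natCast_dvd_natCast.2 hdg).trans (Int.gcd_dvd_right _ _)
    obtain ⟨r', hr'⟩ := hdr
    obtain ⟨s', hs'⟩ := hds
    have hMpos : 0 < M := Nat.pos_of_ne_zero (by rintro rfl; simp at hM; omega)
    have hdq : (d : ℚ) ≠ 0 := by exact_mod_cast hdpos.ne'
    have hle := hNmin M hMpos ⟨⟨r', by
        rw [hM, hr'] at hr; push_cast at hr; exact mul_left_cancel₀ hdq (by linarith)⟩, ⟨s', by
        rw [hM, hs'] at hs; push_cast at hs; exact mul_left_cancel₀ hdq (by linarith)⟩⟩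
    have hd1 : d = 1 := by
      have : d * M ≤ 1 * M := by omega
      have := Nat.le_of_mul_le_mul_right this hMpos
      omega
    have hb1 := Nat.gcd_eq_gcd_ab (Int.gcd r s) N
    have hb2 := Int.gcd_eq_gcd_ab r s
    rw [← hd, hd1, hb2] at hb1
    have hb3 := congrArg (Int.cast : ℤ → ZMod N) hb1
    push_cast at hb3
    rw [ZMod.natCast_self, zero_mul, add_zero] at hb3
    exact ⟨(Int.gcdA r s : ZMod N) * ((Int.gcd r s).gcdA N : ℤ),
      (Int.gcdB r s : ZMod N) * ((Int.gcd r s).gcdA N : ℤ), by rw [hb3]; ring⟩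
  let f : UpperHalfPlane → ℂ := fun τ => (1 - Complex.exp (2 * Real.pi * I / (N : ℂ))) / siegel (a₁ : ℝ) (a₂ : ℝ) τ
  have hNR : (N : ℝ) ≠ 0 := by exact_mod_cast hNpos.ne'
  have hf : f ^ (12 * N) = Sieg.hh N (r, s) := by
    funext τ
    have e1 : (a₁ : ℝ) = (r : ℝ) / N := by
      rw [eq_div_iff hNR, mul_comm]; exact_mod_cast hr
    have e2 : (a₂ : ℝ) = (s : ℝ) / N := by
      rw [eq_div_iff hNR, mul_comm]; exact_mod_cast hs
    rw [Sieg.hh_eq, Sieg.H, ← e1, ← e2, ← Sieg.siegel_pow _ _ τ.2, ← pow_mul, Pi.pow_apply, div_pow,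
      div_eq_mul_inv]
    rfl
  have hInt : IsIntegral (Algebra.adjoin ℤ {Sieg.JJ}) f := by
    refine IsIntegral.of_pow (n := 12 * N) (by omega) ?_
    rw [hf]
    exact Sieg.hh_integral hN1 hcop
  obtain ⟨n, hn, P, hP⟩ := Sieg.unpack hInt
  exact ⟨n, hn, P, fun τ hτ => hP ⟨τ, hτ⟩⟩
end

section
/- Let s and t be positive integers with s ≤ t, let M be an s × t matrix with integer entries whose rank (over ℚ) equals s, and let A be a real number such that every entry of M has absolute value at most A. Then there exists a vector b ∈ ℤᵗ such that ∑_{j=1}^t |b_j| ≤ s^{s/2+1}·A^{s−1} and such that all s coordinates of the vector M·b are strictly positive. -/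
/-- Hadamard's inequality. -/
theorem hadamard_aux (n : ℕ) (N : Matrix (Fin n) (Fin n) ℝ) (C : Fin n → ℝ)
    (hC : ∀ j, 0 ≤ C j) (hN : ∀ i j, |N i j| ≤ C j) :
    |N.det| ≤ ∏ j, (Real.sqrt n * C j) := by
  have : Fact (Module.finrank ℝ (EuclideanSpace ℝ (Fin n)) = n) := ⟨by simp⟩
  let e := EuclideanSpace.basisFun (Fin n) ℝ
  let v : Fin n → EuclideanSpace ℝ (Fin n) := fun j => WithLp.toLp 2 (fun i => N i j)
  have h1 := e.toBasis.orientation.abs_volumeForm_apply_le v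
  rw [e.toBasis.orientation.volumeForm_robust' e] at h1
  have h2 : e.toBasis.det v = N.det := by
    rw [Module.Basis.det_apply]
    congr 1
  rw [h2] at h1
  refine h1.trans (Finset.prod_le_prod (fun _ _ => norm_nonneg _) fun j _ => ?_)
  rw [EuclideanSpace.norm_eq, ← Real.sqrt_sq (hC j), ← Real.sqrt_mul (by positivity)]
  apply Real.sqrt_le_sqrt
  calc ∑ i, ‖v j i‖ ^ 2 ≤ ∑ i : Fin n, C j ^ 2 := by
        apply Finset.sum_le_sum
        intro i _
        exact pow_le_pow_left₀ (norm_nonneg _) (hN i j) 2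
    _ = n * C j ^ 2 := by simp

theorem exists_minor_aux (s t : ℕ) (M : Matrix (Fin s) (Fin t) ℤ)
    (hrank : (M.map ((↑) : ℤ → ℚ)).rank = s) :
    ∃ f : Fin s → Fin t, Function.Injective f ∧ (M.submatrix id f).det ≠ 0 := by
  obtain ⟨κ, a, ha, hsp, hli⟩ := exists_linearIndependent' ℚ (M.map ((↑) : ℤ → ℚ)).col
  have : Fintype κ := Fintype.ofInjective a ha
  have hc : Fintype.card κ = s := by
    rw [← finrank_span_eq_card hli, hsp, ← Matrix.rank_eq_finrank_span_cols, hrank]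
  let e : Fin s ≃ κ := (Fintype.equivFinOfCardEq hc).symm
  refine ⟨a ∘ e, ha.comp e.injective, fun h0 => ?_⟩
  have hli2 := hli.comp e e.injective
  have hu : IsUnit ((M.submatrix id (a ∘ e)).map ((↑) : ℤ → ℚ)) :=
    Matrix.linearIndependent_cols_iff_isUnit.mp hli2
  rw [Matrix.isUnit_iff_isUnit_det] at hu
  apply hu.ne_zero
  have := (Int.castRingHom ℚ).map_det (M.submatrix id (a ∘ e))
  rw [h0, map_zero] at this
  exact this.symm

/-- Let `M` be an `s × t` integer matrix of rank `s` (over `ℚ`) with entries bounded by `A`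
in absolute value. Then there is `b ∈ ℤᵗ` with `∑|b_j| ≤ s^{s/2+1}·A^{s−1}` such that all
coordinates of `M·b` are strictly positive. -/
theorem stmt_18 (s t : ℕ) (hs : 0 < s) (hst : s ≤ t)
    (M : Matrix (Fin s) (Fin t) ℤ)
    (hrank : (M.map ((↑) : ℤ → ℚ)).rank = s)
    (A : ℝ) (hA : ∀ i j, (|M i j| : ℝ) ≤ A) :
    ∃ b : Fin t → ℤ,
      (∑ j, (|b j| : ℝ)) ≤ (s : ℝ) ^ ((s : ℝ) / 2 + 1) * A ^ ((s : ℝ) - 1) ∧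
      ∀ i, 0 < (M.mulVec b) i := by
  have hA0 : 0 ≤ A := (abs_nonneg _).trans (hA ⟨0, hs⟩ ⟨0, hs.trans_le hst⟩)
  obtain ⟨f, hf, hdet⟩ := exists_minor_aux s t M hrank
  set N := M.submatrix id f with hN
  let c : Fin s → ℤ := N.det.sign • N.cramer 1
  have hNc : ∀ i, 0 < N.mulVec c i := by
    intro i
    have : N.mulVec c = N.det.sign • N.det • (1 : Fin s → ℤ) := by
      simp only [c]
      rw [Matrix.mulVec_smul, Matrix.mulVec_cramer]
    rw [this]
    simp only [Pi.smul_apply, Pi.one_apply, smul_eq_mul, mul_one, Int.sign_mul_self_eq_abs]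
    exact abs_pos.mpr hdet
  let b : Fin t → ℤ := Function.extend f c 0
  have hbf : ∀ k, b (f k) = c k := fun k => hf.extend_apply c (0 : Fin t → ℤ) k
  have hb0 : ∀ j, j ∉ Set.range f → b j = 0 := fun j hj =>
    Function.extend_apply' c (0 : Fin t → ℤ) j (by simpa using hj)
  have hcb : ∀ k, |(c k : ℝ)| ≤ (s : ℝ) ^ ((s : ℝ) / 2) * A ^ ((s : ℝ) - 1) := by
    intro k
    have h1 : |(c k : ℝ)| = |((N.updateCol k 1).map ((↑) : ℤ → ℝ)).det| := by
      have h := (Int.castRingHom ℝ).map_det (N.updateCol k 1)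
      have h' : ((N.updateCol k 1).map ((↑) : ℤ → ℝ)).det = ((N.updateCol k 1).det : ℝ) := h.symm
      rw [h', ← Int.cast_abs, ← Int.cast_abs]
      simp only [c, Pi.smul_apply, smul_eq_mul, abs_mul, Matrix.cramer_apply]
      rw [Int.abs_sign_of_ne_zero hdet, one_mul]
    rw [h1]
    refine (hadamard_aux s _ (fun j => if j = k then 1 else A) ?_ ?_).trans ?_
    · intro j; split_ifs
      · exact zero_le_one
      · exact hA0
    · intro i j
      simp only [Matrix.map_apply, Matrix.updateCol_apply]
      split_ifs
      · simp
      · exact hA i (f j)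
    · rw [Finset.prod_mul_distrib, Finset.prod_const, Finset.card_univ, Fintype.card_fin]
      have h2 : (∏ j : Fin s, if j = k then (1 : ℝ) else A) = A ^ ((s : ℝ) - 1) := by
        rw [← Finset.mul_prod_erase Finset.univ _ (Finset.mem_univ k), if_pos rfl, one_mul,
          Finset.prod_congr rfl (fun j hj => if_neg (Finset.ne_of_mem_erase hj)),
          Finset.prod_const, Finset.card_erase_of_mem (Finset.mem_univ k), Finset.card_univ,
          Fintype.card_fin, ← Real.rpow_natCast, Nat.cast_pred hs]
      have h3 : Real.sqrt s ^ s = (s : ℝ) ^ ((s : ℝ) / 2) := by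
        rw [Real.sqrt_eq_rpow, ← Real.rpow_mul_natCast (Nat.cast_nonneg s)]
        congr 1
        ring
      rw [h2, h3]
  refine ⟨b, ?_, fun i => ?_⟩
  · have h1 : ∑ j, |(b j : ℝ)| = ∑ k, |(c k : ℝ)| := by
      symm
      apply Fintype.sum_of_injective f hf
      · intro j hj; simp [hb0 j hj]
      · intro k; rw [hbf]
    rw [h1]
    refine (Finset.sum_le_sum fun k _ => hcb k).trans (le_of_eq ?_)
    rw [Finset.sum_const, Finset.card_univ, Fintype.card_fin, nsmul_eq_mul,
      Real.rpow_add_one (by positivity)]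
    ring
  · have : M.mulVec b i = N.mulVec c i := by
      symm
      simp only [Matrix.mulVec, dotProduct]
      apply Fintype.sum_of_injective f hf
      · intro j hj; simp [hb0 j hj]
      · intro k; rw [hbf]; rfl
    rw [this]
    exact hNc i
end
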